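/- There exists ε₀ > 0 such that for every ε ∈ (0, ε₀), every integer q ≥ 1, and every η₁ > 0, there exist η ∈ (0, η₁) and a C^∞ diffeomorphism g of the unit sphere S² ⊂ ℝ³ such that: (i) g preserves the normalized surface measure σ; (ii) g equals the identity on a neighborhood of each pole (0,0,±1); (iii) g commutes with the rotation R_{1/q} by angle 2π/q about the x₃-axis; (iv) ‖g(x) − x‖ ≤ ε and ‖g⁻¹(x) − x‖ ≤ ε for all x ∈ S²; and (v) for every y ∈ [−1+ε, 1−ε], (1/2)·Leb{ y' ∈ [−1, 1] : for every 1-Lipschitz f : S² → ℝ, ∫ f d(g_*μ_y) − ∫ f d(g_*μ_{y'}) ≤ 3η } ≤ exp(−η^{−2+ε}). (Corollary 4.2, sphere case.) -/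

import Mathlib

open MeasureTheory Metric
open scoped ENNReal Manifold

/-- The normalized surface measure `σ` on the unit sphere `S² ⊂ ℝ³`. -/
noncomputable def sphereMeasure : Measure (sphere (0 : EuclideanSpace ℝ (Fin 3)) 1) :=
  ((4 : ℝ≥0∞) * ENNReal.ofReal Real.pi)⁻¹ •
    Measure.comap Subtype.val (μH[2] : Measure (EuclideanSpace ℝ (Fin 3)))

/-- The cylindrical (Archimedes) parametrization of the unit sphere. -/
noncomputable def piS (θ y : ℝ) : EuclideanSpace ℝ (Fin 3) :=
  (EuclideanSpace.equiv (Fin 3) ℝ).symm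
    ![Real.sqrt (1 - y ^ 2) * Real.cos (2 * Real.pi * θ),
      Real.sqrt (1 - y ^ 2) * Real.sin (2 * Real.pi * θ), y]

/-- The uniform probability measure `μ_y` on the latitude circle of the sphere at height `y`. -/
noncomputable def latitudeMeasure (y : ℝ) :
    Measure (sphere (0 : EuclideanSpace ℝ (Fin 3)) 1) :=
  Measure.comap Subtype.val
    (Measure.map (fun θ => piS θ y) (volume.restrict (Set.Icc (0 : ℝ) 1)))

/-- The rotation of `ℝ³` by angle `2πα` about the `x₃`-axis. -/
noncomputable def rotZ (α : ℝ) (x : EuclideanSpace ℝ (Fin 3)) : EuclideanSpace ℝ (Fin 3) :=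
  (EuclideanSpace.equiv (Fin 3) ℝ).symm
    ![Real.cos (2 * Real.pi * α) * x 0 - Real.sin (2 * Real.pi * α) * x 1,
      Real.sin (2 * Real.pi * α) * x 0 + Real.cos (2 * Real.pi * α) * x 1, x 2]

/-!
Cut the region between the heights `±ρ` into small rectangular tiles, identified with the unit
square by the area preserving longitude-height coordinates, and let `g` act on all of them by the
same compactly supported, area preserving diffeomorphism `G` of the square. Then `g` commutes with
the rotation and is close to the identity, and only the image of a typical horizontal segment under
`G` matters. Products of half-turns of rectangles approximate every permutation of the boxes of a
fine grid, so `G` may be taken close to the following one. Partition the square into `64 v²` coarse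
boxes, each subdivided into `4 × 8` small ones. Every row of the fine grid encodes a word of
`64 v²` digits, one for each coarse box, and the permutation spreads the row over the coarse boxes,
inside each of which it occupies the small box prescribed by the digit. If two words have
sufficiently different digits at a proportion `1 / 64` of the coarse boxes, the images of the two
rows are at Kantorovich distance of order `1 / v`; this fails for a proportion at most
`(3 / 4) ^ v ^ 2` of the pairs. Since `η` is of order `1 / v`, this is less than
`exp (-η ^ (-2 + ε))` for large `v`.
-/

local notation "E³" => EuclideanSpace ℝ (Fin 3)
local notation "S²" => sphere (0 : EuclideanSpace ℝ (Fin 3)) 1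

namespace SphereEmergence

open Set Filter Real
open scoped Topology Pointwise

section UniformlyDistributed

variable {X : Type*} [MetricSpace X] [MeasurableSpace X]

/-- A measure on a metric space is uniformly distributed if the measure of a ball depends only on
its radius. Finite uniformly distributed measures are unique up to scaling, which is how
`sphereMeasure` is compared with Mathlib's surface measure. -/
def UniformlyDistributed (μ : Measure X) : Prop :=
  ∀ x y r, μ (ball x r) = μ (ball y r)

lemma UniformlyDistributed.of_isometryEquiv [OpensMeasurableSpace X] {μ : Measure X}
    (h : ∀ x y : X, ∃ e : X ≃ᵢ X, e x = y ∧ MeasurePreserving e μ μ) :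
    UniformlyDistributed μ := by
  intro x y r
  obtain ⟨e, rfl, he⟩ := h x y
  rw [← he.measure_preimage (s := ball (e x) r) measurableSet_ball.nullMeasurableSet,
    e.preimage_ball, e.symm_apply_apply]

lemma UniformlyDistributed.one_le_liminf_measure_inter_ball_div {ν : Measure X}
    [IsFiniteMeasure ν] [ν.IsOpenPosMeasure] (hν : UniformlyDistributed ν) {U : Set X}
    (hU : IsOpen U) (x₀ : X) {x : X} (hx : x ∈ U) {r : ℕ → ℝ} (hr : ∀ n, 0 < r n)
    (hlim : Tendsto r atTop (𝓝 0)) :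
    1 ≤ liminf (fun n => ν (U ∩ ball x (r n)) / ν (ball x₀ (r n))) atTop := by
  obtain ⟨δ, hδ, hball⟩ := Metric.isOpen_iff.1 hU x hx
  refine le_liminf_of_le (by isBoundedDefault) ?_
  filter_upwards [hlim.eventually (gt_mem_nhds hδ)] with n hn
  rw [inter_eq_right.2 ((ball_subset_ball hn.le).trans hball), hν x x₀,
    ENNReal.div_self (measure_ball_pos ν x₀ (hr n)).ne' (measure_ne_top _ _)]

variable [SecondCountableTopology X] [BorelSpace X]

lemma measurableSet_dist_lt (r : ℝ) : MeasurableSet {p : X × X | dist p.1 p.2 < r} :=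
  (isOpen_lt continuous_dist continuous_const).measurableSet

lemma measurable_measure_inter_ball (ν : Measure X) [SFinite ν] {U : Set X}
    (hU : MeasurableSet U) (r : ℝ) : Measurable fun x => ν (U ∩ ball x r) := by
  convert measurable_measure_prodMk_left (ν := ν.restrict U) (measurableSet_dist_lt r) using 2
    with x
  rw [Measure.restrict_apply' hU, inter_comm]
  congr 2
  ext y
  simp [dist_comm]

lemma setLIntegral_measure_inter_ball_comm (μ ν : Measure X) [SFinite μ] [SFinite ν]
    {U : Set X} (hU : MeasurableSet U) (r : ℝ) :
    ∫⁻ x in U, ν (U ∩ ball x r) ∂μ = ∫⁻ y in U, μ (U ∩ ball y r) ∂ν := by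
  have hr := measurableSet_dist_lt (X := X) r
  have hfub := (Measure.prod_apply (μ := μ.restrict U) (ν := ν.restrict U) hr).symm.trans
    (Measure.prod_apply_symm hr)
  convert hfub using 3 with x y
  · rw [Measure.restrict_apply' hU, inter_comm]
    congr 2
    ext y
    simp [dist_comm]
  · rw [Measure.restrict_apply' hU, inter_comm]
    rfl

lemma UniformlyDistributed.measure_ball_mul_measure_univ {μ ν : Measure X} [SFinite μ] [SFinite ν]
    (hμ : UniformlyDistributed μ) (hν : UniformlyDistributed ν) (x : X) (r : ℝ) :
    μ (ball x r) * ν univ = ν (ball x r) * μ univ := by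
  have hfub := setLIntegral_measure_inter_ball_comm ν μ MeasurableSet.univ r
  simp only [univ_inter, Measure.restrict_univ] at hfub
  rwa [lintegral_congr fun y => hμ y x r, lintegral_congr fun y => hν y x r, lintegral_const,
    lintegral_const] at hfub

/- On an open set `U` one has `ν (U ∩ ball x r) / ν (ball x r) → 1` pointwise, so Fatou and the
symmetry of `dist` compare `μ U` with `ν U`. -/
lemma UniformlyDistributed.measure_le_of_isOpen {μ ν : Measure X} [SFinite μ]
    [IsFiniteMeasure ν] [ν.IsOpenPosMeasure] (hν : UniformlyDistributed ν) {t : ℝ≥0∞}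
    (ht : ∀ x r, μ (ball x r) = t * ν (ball x r)) {U : Set X} (hU : IsOpen U) :
    μ U ≤ t * ν U := by
  rcases isEmpty_or_nonempty X with _ | ⟨⟨x₀⟩⟩
  · simp [eq_empty_of_isEmpty U]
  let r : ℕ → ℝ := fun n => 1 / (n + 1)
  let k : ℕ → ℝ≥0∞ := fun n => ν (ball x₀ (r n))
  have hr : ∀ n, 0 < r n := fun n => by positivity
  have hk0 : ∀ n, k n ≠ 0 := fun n => (measure_ball_pos ν x₀ (hr n)).ne'
  have hk : ∀ n, k n ≠ ∞ := fun n => measure_ne_top _ _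
  have hmeas : ∀ n, Measurable fun x => ν (U ∩ ball x (r n)) := fun n =>
    measurable_measure_inter_ball ν hU.measurableSet (r n)
  have hbound : ∀ n, ∫⁻ x in U, ν (U ∩ ball x (r n)) / k n ∂μ ≤ t * ν U := by
    intro n
    simp only [div_eq_mul_inv]
    rw [lintegral_mul_const _ (hmeas n),
      setLIntegral_measure_inter_ball_comm μ ν hU.measurableSet]
    calc (∫⁻ y in U, μ (U ∩ ball y (r n)) ∂ν) * (k n)⁻¹
        ≤ (∫⁻ _ in U, t * k n ∂ν) * (k n)⁻¹ := by
          gcongr with y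
          exact (measure_mono inter_subset_right).trans_eq (by rw [ht, hν y x₀])
      _ = t * ν U := by
          rw [setLIntegral_const, mul_right_comm, mul_assoc t,
            ENNReal.mul_inv_cancel (hk0 n) (hk n), mul_one]
  calc μ U = ∫⁻ _ in U, 1 ∂μ := by simp
    _ ≤ ∫⁻ x in U, liminf (fun n => ν (U ∩ ball x (r n)) / k n) atTop ∂μ :=
        setLIntegral_mono' hU.measurableSet fun x hx =>
          hν.one_le_liminf_measure_inter_ball_div hU x₀ hx hr
            tendsto_one_div_add_atTop_nhds_zero_nat
    _ ≤ liminf (fun n => ∫⁻ x in U, ν (U ∩ ball x (r n)) / k n ∂μ) atTop :=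
        lintegral_liminf_le fun n => (hmeas n).div_const _
    _ ≤ t * ν U := by
        refine liminf_le_of_le (by isBoundedDefault) fun b hb => ?_
        obtain ⟨n, hn⟩ := hb.exists
        exact hn.trans (hbound n)

theorem UniformlyDistributed.eq_smul {μ ν : Measure X} [Nonempty X] [IsFiniteMeasure μ]
    [IsFiniteMeasure ν] [ν.IsOpenPosMeasure] (hμ : UniformlyDistributed μ)
    (hν : UniformlyDistributed ν) : μ = (μ univ / ν univ) • ν := by
  have hν0 : ν univ ≠ 0 := (isOpen_univ.measure_pos ν univ_nonempty).ne'
  have hνt : ν univ ≠ ∞ := measure_ne_top _ _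
  have hfin : IsFiniteMeasure ((μ univ / ν univ) • ν) :=
    ν.smul_finite (ENNReal.div_ne_top (measure_ne_top _ _) hν0)
  have hball : ∀ x r, μ (ball x r) = μ univ / ν univ * ν (ball x r) := by
    intro x r
    rw [← ENNReal.mul_div_right_comm, mul_comm, ← hμ.measure_ball_mul_measure_univ hν,
      ENNReal.mul_div_cancel_right hν0 hνt]
  refine Measure.eq_of_le_of_measure_univ_eq (fun s => ?_) ?_
  · rw [measure_eq_iInf_isOpen s ((μ univ / ν univ) • ν)]
    exact le_iInf₂ fun U hsU => le_iInf fun hU =>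
      (measure_mono hsU).trans (hν.measure_le_of_isOpen hball hU)
  · rw [Measure.smul_apply, smul_eq_mul, ENNReal.div_mul_cancel hν0 hνt]

end UniformlyDistributed

lemma hausdorffMeasure_image_lt_top {X Y : Type*} [MetricSpace X] [MeasurableSpace X]
    [BorelSpace X] [MetricSpace Y] [MeasurableSpace Y] [BorelSpace Y] {d : ℝ} (hd : 0 ≤ d)
    [IsLocallyFiniteMeasure (μH[d] : Measure X)] {f : X → Y} (hf : LocallyLipschitz f) {K : Set X}
    (hK : IsCompact K) : μH[d] (f '' K) < ∞ := by
  obtain ⟨C, hC⟩ := hf.locallyLipschitzOn.exists_lipschitzOnWith_of_compact hK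
  exact (hC.hausdorffMeasure_image_le hd).trans_lt
    (ENNReal.mul_lt_top (ENNReal.rpow_lt_top_of_nonneg hd (by simp)) hK.measure_lt_top)

section SphereMeasures

variable {E : Type*} [NormedAddCommGroup E] [InnerProductSpace ℝ E]

/-- The isometry of the unit sphere induced by a linear isometry of the ambient space. -/
def sphereIsometryEquiv (L : E ≃ₗᵢ[ℝ] E) : sphere (0 : E) 1 ≃ᵢ sphere (0 : E) 1 where
  toFun x := ⟨L x, by simp⟩
  invFun x := ⟨L.symm x, by simp⟩
  left_inv x := by simp
  right_inv x := by simp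
  isometry_toFun x y := L.isometry.edist_eq x y

lemma exists_sphereIsometryEquiv_apply_eq (x y : sphere (0 : E) 1) :
    ∃ L : E ≃ₗᵢ[ℝ] E, sphereIsometryEquiv L x = y := by
  refine ⟨(ℝ ∙ ((x : E) - y))ᗮ.reflection, Subtype.ext ?_⟩
  exact Submodule.reflection_sub (by rw [norm_eq_of_mem_sphere, norm_eq_of_mem_sphere])

variable [MeasurableSpace E] [BorelSpace E]

lemma UniformlyDistributed.of_sphereIsometryEquiv {μ : Measure (sphere (0 : E) 1)}
    (h : ∀ L : E ≃ₗᵢ[ℝ] E, MeasurePreserving (sphereIsometryEquiv L) μ μ) :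
    UniformlyDistributed μ :=
  .of_isometryEquiv fun x y =>
    (exists_sphereIsometryEquiv_apply_eq x y).imp' sphereIsometryEquiv fun L hL => ⟨hL, h L⟩

lemma measurePreserving_sphereIsometryEquiv_toSphere [FiniteDimensional ℝ E] (L : E ≃ₗᵢ[ℝ] E) :
    MeasurePreserving (sphereIsometryEquiv L) (volume : Measure E).toSphere
      (volume : Measure E).toSphere := by
  refine ⟨(sphereIsometryEquiv L).continuous.measurable, ?_⟩
  ext s hs
  have hcone : Ioo (0 : ℝ) 1 • (Subtype.val '' (sphereIsometryEquiv L ⁻¹' s)) =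
      L ⁻¹' (Ioo (0 : ℝ) 1 • (Subtype.val '' s)) := by
    ext z
    simp only [Set.mem_smul, mem_preimage]
    constructor
    · rintro ⟨a, ha, _, ⟨u, hu, rfl⟩, rfl⟩
      exact ⟨a, ha, L u, ⟨_, hu, rfl⟩, by simp⟩
    · rintro ⟨a, ha, _, ⟨u, hu, rfl⟩, h⟩
      refine ⟨a, ha, _, ⟨(sphereIsometryEquiv L).symm u, by simpa using hu, rfl⟩, ?_⟩
      change a • L.symm u = z
      rw [← map_smul]
      exact L.symm_apply_eq.2 h
  have hLs := (sphereIsometryEquiv L).continuous.measurable hs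
  rw [Measure.map_apply (sphereIsometryEquiv L).continuous.measurable hs,
    Measure.toSphere_apply' _ hLs, Measure.toSphere_apply' _ hs, hcone]
  congr 1
  exact L.measurePreserving.measure_preimage_emb L.toHomeomorph.measurableEmbedding _

end SphereMeasures

lemma comap_val_hausdorffMeasure {X : Type*} [MetricSpace X] [MeasurableSpace X] [BorelSpace X]
    {d : ℝ} (hd : 0 ≤ d) {s : Set X} (hs : MeasurableSet s) :
    (μH[d] : Measure X).comap (Subtype.val : s → X) = μH[d] := by
  ext t
  rw [(MeasurableEmbedding.subtype_coe hs).comap_apply,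
    isometry_subtype_coe.hausdorffMeasure_image (.inl hd)]

lemma mem_unitSphere_iff (x : E³) :
    x ∈ sphere (0 : E³) 1 ↔ x 0 ^ 2 + x 1 ^ 2 + x 2 ^ 2 = 1 := by
  simp [EuclideanSpace.norm_eq, Fin.sum_univ_three]

section Parametrizations

/-- Longitude-latitude coordinates on the sphere, with the longitude measured in full turns and
the latitude in radians. Unlike `piS`, this map is smooth on the whole plane. -/
noncomputable def geographic (p : ℝ × ℝ) : S² :=
  ⟨!₂[cos p.2 * cos (2 * π * p.1), cos p.2 * sin (2 * π * p.1), sin p.2], by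
    rw [mem_unitSphere_iff]
    simp only [Matrix.cons_val]
    linear_combination cos p.2 ^ 2 * sin_sq_add_cos_sq (2 * π * p.1) + sin_sq_add_cos_sq p.2⟩

/-- The map `piS` with values in the sphere. Passing through the latitude `arcsin y` makes it
total: heights outside `[-1, 1]` are sent to the poles. -/
noncomputable def cylindrical (p : ℝ × ℝ) : S² :=
  geographic (p.1, arcsin p.2)

lemma contDiff_coe_geographic {n : WithTop ℕ∞} :
    ContDiff ℝ n fun p => (geographic p : E³) := by
  rw [contDiff_euclidean]
  intro i
  fin_cases i <;> simp only [geographic, Fin.zero_eta, Fin.mk_one, Fin.reduceFinMk, Matrix.cons_val]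
    <;> fun_prop

lemma contMDiff_geographic {n : WithTop ℕ∞} : ContMDiff 𝓘(ℝ, ℝ × ℝ) (𝓡 2) n geographic := by
  have : Fact (Module.finrank ℝ E³ = 2 + 1) := ⟨by simp⟩
  exact contDiff_coe_geographic.contMDiff.codRestrict_sphere _

lemma piS_zero (θ y : ℝ) : piS θ y 0 = √(1 - y ^ 2) * cos (2 * π * θ) := by simp [piS]

lemma piS_one (θ y : ℝ) : piS θ y 1 = √(1 - y ^ 2) * sin (2 * π * θ) := by simp [piS]

lemma piS_two (θ y : ℝ) : piS θ y 2 = y := by simp [piS]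

lemma coe_cylindrical {p : ℝ × ℝ} (hp : p.2 ∈ Icc (-1 : ℝ) 1) :
    (cylindrical p : E³) = piS p.1 p.2 := by
  ext i
  fin_cases i <;> simp [cylindrical, geographic, piS, cos_arcsin, sin_arcsin hp.1 hp.2]

lemma cylindrical_add_int (θ y : ℝ) (n : ℤ) : cylindrical (θ + n, y) = cylindrical (θ, y) := by
  have hturn : 2 * π * (θ + n) = 2 * π * θ + n * (2 * π) := by ring
  simp only [cylindrical, geographic, hturn, cos_add_int_mul_two_pi, sin_add_int_mul_two_pi]

lemma continuous_cylindrical : Continuous cylindrical :=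
  (contMDiff_geographic (n := 0)).continuous.comp
    (continuous_fst.prodMk (continuous_arcsin.comp continuous_snd))

lemma sqrt_one_sub_sq_pos {y : ℝ} (hy : y ∈ Ioo (-1 : ℝ) 1) : 0 < √(1 - y ^ 2) :=
  sqrt_pos.2 (by nlinarith [hy.1, hy.2])

lemma exists_int_eq_add_of_cos_eq_of_sin_eq {a b : ℝ} (hcos : cos (2 * π * a) = cos (2 * π * b))
    (hsin : sin (2 * π * a) = sin (2 * π * b)) : ∃ n : ℤ, a = b + n := by
  obtain ⟨n, hn⟩ := Angle.angle_eq_iff_two_pi_dvd_sub.1 (Angle.cos_sin_inj hcos hsin)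
  exact ⟨n, mul_left_cancel₀ two_pi_pos.ne' (by linarith)⟩

lemma piS_injective_mod_one {θ y θ' y' : ℝ} (hy : y ∈ Ioo (-1 : ℝ) 1)
    (h : piS θ y = piS θ' y') : y = y' ∧ ∃ n : ℤ, θ = θ' + n := by
  obtain rfl : y = y' := by rw [← piS_two θ y, h, piS_two]
  have hs := (sqrt_one_sub_sq_pos hy).ne'
  have h0 := congrArg (fun x : E³ => x 0) h
  have h1 := congrArg (fun x : E³ => x 1) h
  simp only [piS_zero, piS_one] at h0 h1
  exact ⟨rfl, exists_int_eq_add_of_cos_eq_of_sin_eq (mul_left_cancel₀ hs h0)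
    (mul_left_cancel₀ hs h1)⟩

lemma exists_polar_coordinates (a b : ℝ) : ∃ θ ∈ Icc (0 : ℝ) 1,
    √(a ^ 2 + b ^ 2) * cos (2 * π * θ) = a ∧ √(a ^ 2 + b ^ 2) * sin (2 * π * θ) = b := by
  have hnorm : ‖(⟨a, b⟩ : ℂ)‖ = √(a ^ 2 + b ^ 2) := by
    rw [Complex.norm_def, Complex.normSq_mk]
    ring_nf
  set φ := Complex.arg ⟨a, b⟩ with hφ
  have hangle : 2 * π * Int.fract (φ / (2 * π)) = φ - ⌊φ / (2 * π)⌋ * (2 * π) := by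
    rw [Int.fract]
    field_simp
  refine ⟨Int.fract (φ / (2 * π)), ⟨Int.fract_nonneg _, (Int.fract_lt_one _).le⟩, ?_, ?_⟩
  · rw [hangle, cos_sub_int_mul_two_pi, ← hnorm, hφ, Complex.norm_mul_cos_arg]
  · rw [hangle, sin_sub_int_mul_two_pi, ← hnorm, hφ, Complex.norm_mul_sin_arg]

lemma height_mem_Icc (x : S²) : (x : E³) 2 ∈ Icc (-1 : ℝ) 1 := by
  have hx := (mem_unitSphere_iff x).1 x.2
  constructor <;> nlinarith

lemma exists_cylindrical_eq (x : S²) :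
    ∃ θ ∈ Icc (0 : ℝ) 1, cylindrical (θ, (x : E³) 2) = x := by
  have hx := (mem_unitSphere_iff x).1 x.2
  obtain ⟨θ, hθ, hcos, hsin⟩ := exists_polar_coordinates ((x : E³) 0) ((x : E³) 1)
  rw [show (x : E³) 0 ^ 2 + (x : E³) 1 ^ 2 = 1 - (x : E³) 2 ^ 2 by linarith] at hcos hsin
  refine ⟨θ, hθ, Subtype.ext ?_⟩
  rw [coe_cylindrical (height_mem_Icc x)]
  ext i
  fin_cases i
  · exact (piS_zero _ _).trans hcos
  · exact (piS_one _ _).trans hsin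
  · exact piS_two _ _

lemma locallyLipschitz_geographic : LocallyLipschitz geographic := fun p =>
  (contDiff_coe_geographic (n := 1)).locallyLipschitz p

lemma hausdorffMeasure_unitSphere_lt_top : (μH[2] : Measure S²) univ < ∞ := by
  have : IsLocallyFiniteMeasure (μH[2] : Measure (ℝ × ℝ)) := by
    rw [hausdorffMeasure_prod_real]
    infer_instance
  refine (measure_mono fun x _ => ?_).trans_lt <| hausdorffMeasure_image_lt_top zero_le_two
    locallyLipschitz_geographic
    ((isCompact_Icc (a := (0 : ℝ)) (b := 1)).prod (isCompact_Icc (a := -(π / 2)) (b := π / 2)))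
  obtain ⟨θ, hθ, hx⟩ := exists_cylindrical_eq x
  exact ⟨_, ⟨hθ, arcsin_mem_Icc _⟩, hx⟩

lemma injOn_cylindrical (θ₀ : ℝ) :
    InjOn cylindrical (Ioo θ₀ (θ₀ + 1) ×ˢ Ioo (-1) 1) := by
  rintro ⟨θ, y⟩ ⟨hθ, hy⟩ ⟨θ', y'⟩ ⟨hθ', hy'⟩ h
  have hS := congrArg Subtype.val h
  simp only at hθ hθ' hy hy'
  rw [coe_cylindrical (Ioo_subset_Icc_self hy), coe_cylindrical (Ioo_subset_Icc_self hy')] at hS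
  obtain ⟨rfl, n, hn⟩ := piS_injective_mod_one hy hS
  simp only at hn
  obtain rfl : n = 0 := by
    have h₁ : -1 < (n : ℝ) := by linarith [hθ.1, hθ'.2, hn]
    have h₂ : (n : ℝ) < 1 := by linarith [hθ.2, hθ'.1, hn]
    norm_cast at h₁ h₂
    lia
  simp [hn]

end Parametrizations

section Archimedes

/-- Polar coordinates of `ℝ³` with cylindrical coordinates on the unit sphere: the point at radius
`v 2` over the point `piS (v 0) (v 1)`. The values are in `Fin 3 → ℝ` so that the
change of variables formula can be fed with an explicit Jacobian matrix. -/
noncomputable def polarMap (v : Fin 3 → ℝ) : Fin 3 → ℝ :=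
  WithLp.ofLp (v 2 • piS (v 0) (v 1))

/-- The Jacobian matrix of `polarMap`. -/
noncomputable def polarJacobian (v : Fin 3 → ℝ) : Matrix (Fin 3) (Fin 3) ℝ :=
  let s := √(1 - v 1 ^ 2)
  let C := cos (2 * π * v 0)
  let S := sin (2 * π * v 0)
  !![-(v 2 * s * (2 * π) * S), -(v 2 * (v 1 / s) * C), s * C;
    v 2 * s * (2 * π) * C, -(v 2 * (v 1 / s) * S), s * S;
    0, v 2, v 1]

lemma hasFDerivAt_polarMap {v : Fin 3 → ℝ} (hv : v 1 ∈ Ioo (-1 : ℝ) 1) :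
    HasFDerivAt polarMap (polarJacobian v).mulVecLin.toContinuousLinearMap v := by
  have hcoord (i : Fin 3) := hasFDerivAt_apply (𝕜 := ℝ) i v
  have hsqrt := (((hcoord 1).pow 2).const_sub 1).sqrt (by nlinarith [hv.1, hv.2])
  have hcos := ((hcoord 0).const_mul (2 * π)).cos
  have hsin := ((hcoord 0).const_mul (2 * π)).sin
  have hs := (sqrt_one_sub_sq_pos hv).ne'
  rw [hasFDerivAt_pi']
  intro i
  fin_cases i
  · refine ((hcoord 2).mul (hsqrt.mul hcos)).congr_fderiv ?_
    ext w
    simp [polarJacobian, dotProduct, Fin.sum_univ_three]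
    field
  · refine ((hcoord 2).mul (hsqrt.mul hsin)).congr_fderiv ?_
    ext w
    simp [polarJacobian, dotProduct, Fin.sum_univ_three]
    field
  · refine ((hcoord 2).mul (hcoord 1)).congr_fderiv ?_
    ext w
    simp [polarJacobian, dotProduct, Fin.sum_univ_three]

lemma det_polarJacobian {v : Fin 3 → ℝ} (hv : v 1 ∈ Ioo (-1 : ℝ) 1) :
    (polarJacobian v).det = 2 * π * v 2 ^ 2 := by
  have hs := (sqrt_one_sub_sq_pos hv).ne'
  have hsq := sq_sqrt (show 0 ≤ 1 - v 1 ^ 2 by nlinarith [hv.1, hv.2])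
  have htrig := sin_sq_add_cos_sq (2 * π * v 0)
  rw [Matrix.det_fin_three]
  simp only [polarJacobian, Matrix.of_apply, Matrix.cons_val]
  generalize √(1 - v 1 ^ 2) = s at *
  field_simp
  linear_combination 2 * π * v 2 ^ 2 * (s ^ 2 + v 1 ^ 2) * htrig + 2 * π * v 2 ^ 2 * hsq

/-- The part of the domain of `polarMap` lying over `A` and inside the open unit ball. -/
def polarDomain (A : Set (ℝ × ℝ)) : Set (Fin 3 → ℝ) :=
  {v | (v 0, v 1) ∈ A ∧ v 2 ∈ Ioo (0 : ℝ) 1}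

lemma measurableSet_polarDomain {A : Set (ℝ × ℝ)} (hA : MeasurableSet A) :
    MeasurableSet (polarDomain A) :=
  ((by fun_prop : Measurable fun v : Fin 3 → ℝ => (v 0, v 1)) hA).inter
    (measurable_pi_apply 2 measurableSet_Ioo)

lemma setLIntegral_polarDomain (A : Set (ℝ × ℝ)) {f : ℝ → ℝ≥0∞} (hf : Measurable f) :
    ∫⁻ v in polarDomain A, f (v 2) = (∫⁻ t in Ioo 0 1, f t) * volume A := by
  have hmp : MeasurePreserving ((Prod.map id MeasurableEquiv.finTwoArrow) ∘
      MeasurableEquiv.piFinSuccAbove (fun _ : Fin 3 => ℝ) 2) volume volume :=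
    ((MeasurePreserving.id _).prod (volume_preserving_finTwoArrow ℝ)).comp
      (volume_preserving_piFinSuccAbove _ _)
  have hemb : MeasurableEmbedding ((Prod.map id MeasurableEquiv.finTwoArrow) ∘
      MeasurableEquiv.piFinSuccAbove (fun _ : Fin 3 => ℝ) 2) :=
    ((MeasurableEquiv.refl ℝ).prodCongr MeasurableEquiv.finTwoArrow).measurableEmbedding.comp
      (MeasurableEquiv.measurableEmbedding _)
  have hpre : polarDomain A = ((Prod.map id MeasurableEquiv.finTwoArrow) ∘
      MeasurableEquiv.piFinSuccAbove (fun _ : Fin 3 => ℝ) 2) ⁻¹' (Ioo 0 1 ×ˢ A) := by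
    ext v
    exact and_comm
  calc ∫⁻ v in polarDomain A, f (v 2) = ∫⁻ z in Ioo 0 1 ×ˢ A, f z.1 * 1 := by
        simp only [mul_one]
        rw [hpre, ← hmp.setLIntegral_comp_preimage_emb hemb]
        rfl
    _ = (∫⁻ t in Ioo 0 1, f t) * volume A := by
        rw [Measure.volume_eq_prod, ← Measure.prod_restrict,
          lintegral_prod_mul hf.aemeasurable aemeasurable_const, setLIntegral_one]

variable {θ₀ : ℝ} {A : Set (ℝ × ℝ)}

lemma toLp_polarMap {v : Fin 3 → ℝ} (hv : v 1 ∈ Icc (-1 : ℝ) 1) :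
    WithLp.toLp 2 (polarMap v) = v 2 • (cylindrical (v 0, v 1) : E³) := by
  rw [coe_cylindrical hv]
  rfl

lemma injOn_polarMap (hA : A ⊆ Ioo θ₀ (θ₀ + 1) ×ˢ Ioo (-1) 1) :
    InjOn polarMap (polarDomain A) := by
  rintro v ⟨hv, hv2⟩ w ⟨hw, hw2⟩ h
  have hvw : v 2 • (cylindrical (v 0, v 1) : E³) = w 2 • (cylindrical (w 0, w 1) : E³) := by
    rw [← toLp_polarMap (Ioo_subset_Icc_self (hA hv).2), h,
      toLp_polarMap (Ioo_subset_Icc_self (hA hw).2)]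
  have hradius : v 2 = w 2 := by
    have hnorm := congrArg norm hvw
    rwa [norm_smul, norm_smul, norm_eq_of_mem_sphere, norm_eq_of_mem_sphere, mul_one, mul_one,
      norm_of_nonneg hv2.1.le, norm_of_nonneg hw2.1.le] at hnorm
  rw [hradius] at hvw
  obtain ⟨h0, h1⟩ := Prod.mk.inj <|
    injOn_cylindrical θ₀ (hA hv) (hA hw) (Subtype.ext (smul_right_injective _ hw2.1.ne' hvw))
  ext i
  fin_cases i
  exacts [h0, h1, hradius]

lemma toLp_preimage_cone (hA : A ⊆ Ioo θ₀ (θ₀ + 1) ×ˢ Ioo (-1) 1) :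
    MeasurableEquiv.toLp 2 (Fin 3 → ℝ) ⁻¹' (Ioo (0 : ℝ) 1 • (Subtype.val '' (cylindrical '' A))) =
      polarMap '' polarDomain A := by
  ext w
  constructor
  · rintro ⟨t, ht, _, ⟨_, ⟨p, hp, rfl⟩, rfl⟩, h⟩
    refine ⟨![p.1, p.2, t], ⟨hp, ht⟩, (MeasurableEquiv.toLp 2 (Fin 3 → ℝ)).injective ?_⟩
    exact (toLp_polarMap (Ioo_subset_Icc_self (hA hp).2)).trans h
  · rintro ⟨v, ⟨hv, hv2⟩, rfl⟩
    exact ⟨v 2, hv2, _, ⟨_, ⟨_, hv, rfl⟩, rfl⟩,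
      (toLp_polarMap (Ioo_subset_Icc_self (hA hv).2)).symm⟩

lemma volume_polarMap_image (hA : A ⊆ Ioo θ₀ (θ₀ + 1) ×ˢ Ioo (-1) 1) (hm : MeasurableSet A) :
    volume (polarMap '' polarDomain A) =
      (∫⁻ t in Ioo (0 : ℝ) 1, ENNReal.ofReal (2 * π * t ^ 2)) * volume A := by
  have hheight : ∀ v ∈ polarDomain A, v 1 ∈ Ioo (-1 : ℝ) 1 := fun v hv => (hA hv.1).2
  rw [← lintegral_abs_det_fderiv_eq_addHaar_image volume (measurableSet_polarDomain hm)
    (fun v hv => (hasFDerivAt_polarMap (hheight v hv)).hasFDerivWithinAt) (injOn_polarMap hA),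
    ← setLIntegral_polarDomain A (by fun_prop)]
  refine setLIntegral_congr_fun (measurableSet_polarDomain hm) fun v hv => ?_
  have hdet : (polarJacobian v).mulVecLin.toContinuousLinearMap.det = (polarJacobian v).det := by
    rw [LinearMap.det_toContinuousLinearMap, ← Matrix.toLin'_apply', LinearMap.det_toLin']
  rw [hdet, det_polarJacobian (hheight v hv), abs_of_nonneg (by positivity)]

lemma measurableSet_cylindrical_image (hA : A ⊆ Ioo θ₀ (θ₀ + 1) ×ˢ Ioo (-1) 1)
    (hm : MeasurableSet A) : MeasurableSet (cylindrical '' A) :=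
  hm.image_of_continuousOn_injOn continuous_cylindrical.continuousOn
    ((injOn_cylindrical θ₀).mono hA)

lemma toSphere_cylindrical_image (hA : A ⊆ Ioo θ₀ (θ₀ + 1) ×ˢ Ioo (-1) 1) (hm : MeasurableSet A) :
    (volume : Measure E³).toSphere (cylindrical '' A) =
      3 * (∫⁻ t in Ioo (0 : ℝ) 1, ENNReal.ofReal (2 * π * t ^ 2)) * volume A := by
  rw [Measure.toSphere_apply' _ (measurableSet_cylindrical_image hA hm), mul_assoc,
    ← volume_polarMap_image hA hm, ← toLp_preimage_cone hA,
    ← (EuclideanSpace.volume_preserving_symm_measurableEquiv_toLp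
      (Fin 3)).symm.measure_preimage_equiv, finrank_euclideanSpace_fin]
  rfl

lemma exists_sphereMeasure_eq_smul_toSphere :
    ∃ c : ℝ≥0∞, sphereMeasure = c • (volume : Measure E³).toSphere := by
  have hfin : IsFiniteMeasure (μH[2] : Measure S²) := ⟨hausdorffMeasure_unitSphere_lt_top⟩
  have hH : UniformlyDistributed (μH[2] : Measure S²) := .of_sphereIsometryEquiv fun L =>
    (sphereIsometryEquiv L).measurePreserving_hausdorffMeasure 2
  have hT : UniformlyDistributed (volume : Measure E³).toSphere :=
    .of_sphereIsometryEquiv measurePreserving_sphereIsometryEquiv_toSphere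
  have : Nonempty S² := ⟨cylindrical 0⟩
  rw [sphereMeasure, comap_val_hausdorffMeasure zero_le_two isClosed_sphere.measurableSet,
    hH.eq_smul hT, smul_smul]
  exact ⟨_, rfl⟩

theorem exists_sphereMeasure_cylindrical_image_eq : ∃ c : ℝ≥0∞, ∀ (θ₀ : ℝ) (A : Set (ℝ × ℝ)),
    A ⊆ Ioo θ₀ (θ₀ + 1) ×ˢ Ioo (-1) 1 → MeasurableSet A →
      sphereMeasure (cylindrical '' A) = c * volume A := by
  obtain ⟨c, hc⟩ := exists_sphereMeasure_eq_smul_toSphere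
  refine ⟨c * (3 * ∫⁻ t in Ioo (0 : ℝ) 1, ENNReal.ofReal (2 * π * t ^ 2)), fun θ₀ A hA hm => ?_⟩
  rw [hc, Measure.smul_apply, smul_eq_mul, toSphere_cylindrical_image hA hm, ← mul_assoc]

end Archimedes

section ConjExtend

variable {M N : Type*} [TopologicalSpace M] [TopologicalSpace N]

open Classical in
/-- The conjugate of `G` by the chart `Φ`, extended by the identity. -/
noncomputable def conjExtend (Φ : OpenPartialHomeomorph M N) (G : M → M) : N → N :=
  Φ.target.piecewise (Φ ∘ G ∘ Φ.symm) id

variable {Φ : OpenPartialHomeomorph M N} {G G' : M → M}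

lemma conjExtend_of_notMem {x : N} (hx : x ∉ Φ.target) : conjExtend Φ G x = x :=
  if_neg hx

lemma conjExtend_chart_apply {p : M} (hp : p ∈ Φ.source) :
    conjExtend Φ G (Φ p) = Φ (G p) := by
  rw [conjExtend, piecewise, if_pos (Φ.map_source hp)]
  simp only [Function.comp_apply, Φ.left_inv hp]

lemma eqOn_conjExtend_id {K : Set M} (hG : EqOn G id Kᶜ) :
    EqOn (conjExtend Φ G) id (Φ '' K)ᶜ := by
  intro x hx
  by_cases hxV : x ∈ Φ.target
  · obtain ⟨p, hp, rfl⟩ := Φ.surjOn hxV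
    rw [conjExtend_chart_apply hp, hG fun h => hx ⟨p, h, rfl⟩, id, id]
  · exact conjExtend_of_notMem hxV

lemma leftInverse_conjExtend (hG : MapsTo G Φ.source Φ.source)
    (hGG' : Function.LeftInverse G' G) :
    Function.LeftInverse (conjExtend Φ G') (conjExtend Φ G) := by
  intro x
  by_cases hx : x ∈ Φ.target
  · obtain ⟨p, hp, rfl⟩ := Φ.surjOn hx
    rw [conjExtend_chart_apply hp, conjExtend_chart_apply (hG hp), hGG']
  · rw [conjExtend_of_notMem hx, conjExtend_of_notMem hx]

end ConjExtend

section MeasureDiffeo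

variable {E F H H' : Type*} [NormedAddCommGroup E] [NormedSpace ℝ E] [NormedAddCommGroup F]
  [NormedSpace ℝ F] [TopologicalSpace H] [TopologicalSpace H']
  {I : ModelWithCorners ℝ E H} {J : ModelWithCorners ℝ F H'}
  {M N : Type*} [TopologicalSpace M] [ChartedSpace H M] [MeasurableSpace M]
  [TopologicalSpace N] [ChartedSpace H' N] [MeasurableSpace N]
  {μ : Measure M} {ν : Measure N}

/-- `g` is a `C^∞` diffeomorphism preserving `μ` which is compactly supported in `U`: it is the
identity off some compact subset of `U`. -/
structure IsMeasureDiffeoOn (I : ModelWithCorners ℝ E H) (μ : Measure M) (U : Set M)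
    (g : M ≃ₜ M) : Prop where
  contMDiff : ContMDiff I I (⊤ : ℕ∞) g
  contMDiff_symm : ContMDiff I I (⊤ : ℕ∞) g.symm
  measurePreserving : MeasurePreserving g μ μ
  exists_compact : ∃ K ⊆ U, IsCompact K ∧ EqOn g id Kᶜ

namespace IsMeasureDiffeoOn

variable {U V : Set M} {g g' : M ≃ₜ M}

lemma mono (hg : IsMeasureDiffeoOn I μ U g) (hUV : U ⊆ V) : IsMeasureDiffeoOn I μ V g := by
  obtain ⟨K, hK, hKc, hgK⟩ := hg.exists_compact
  exact ⟨hg.1, hg.2, hg.3, K, hK.trans hUV, hKc, hgK⟩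

lemma refl (U : Set M) : IsMeasureDiffeoOn I μ U (.refl M) :=
  ⟨contMDiff_id, contMDiff_id, .id _, ∅, empty_subset _, isCompact_empty, fun _ _ => rfl⟩

lemma trans (hg : IsMeasureDiffeoOn I μ U g) (hg' : IsMeasureDiffeoOn I μ U g') :
    IsMeasureDiffeoOn I μ U (g.trans g') := by
  obtain ⟨K, hK, hKc, hgK⟩ := hg.exists_compact
  obtain ⟨K', hK', hKc', hgK'⟩ := hg'.exists_compact
  refine ⟨hg'.contMDiff.comp hg.contMDiff, hg.contMDiff_symm.comp hg'.contMDiff_symm,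
    hg'.measurePreserving.comp hg.measurePreserving, K ∪ K', union_subset hK hK',
    hKc.union hKc', fun x hx => ?_⟩
  rw [compl_union] at hx
  rw [Homeomorph.trans_apply, hgK hx.1, id, hgK' hx.2, id]

lemma symm [BorelSpace M] (hg : IsMeasureDiffeoOn I μ U g) : IsMeasureDiffeoOn I μ U g.symm := by
  obtain ⟨K, hK, hKc, hgK⟩ := hg.exists_compact
  refine ⟨hg.2, hg.1, hg.3.symm (e := g.toMeasurableEquiv), K, hK, hKc, fun x hx => ?_⟩
  rw [g.symm_apply_eq, id, hgK hx, id]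

lemma apply_of_notMem (hg : IsMeasureDiffeoOn I μ U g) {x : M} (hx : x ∉ U) : g x = x := by
  obtain ⟨K, hK, -, hgK⟩ := hg.exists_compact
  exact hgK fun h => hx (hK h)

lemma apply_mem_iff (hg : IsMeasureDiffeoOn I μ U g) {x : M} : g x ∈ U ↔ x ∈ U := by
  by_cases hx : x ∈ U
  · refine iff_of_true ?_ hx
    by_contra hgx
    exact hgx ((g.injective (hg.apply_of_notMem hgx)).symm ▸ hx)
  · rw [hg.apply_of_notMem hx]

end IsMeasureDiffeoOn

theorem exists_isMeasureDiffeoOn_iUnion {ι : Type*} [Finite ι] {V : ι → Set M}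
    (hV : Pairwise (Function.onFun Disjoint V)) {γ : ι → M ≃ₜ M}
    (hγ : ∀ i, IsMeasureDiffeoOn I μ (V i) (γ i)) : ∃ g : M ≃ₜ M,
      IsMeasureDiffeoOn I μ (⋃ i, V i) g ∧ ∀ i, EqOn g (γ i) (V i) := by
  classical
  have := Fintype.ofFinite ι
  suffices h : ∀ s : Finset ι, ∃ g : M ≃ₜ M,
      IsMeasureDiffeoOn I μ (⋃ i ∈ s, V i) g ∧ ∀ i ∈ s, EqOn g (γ i) (V i) by
    simpa using h Finset.univ
  intro s
  induction s using Finset.induction with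
  | empty => exact ⟨.refl M, .refl _, by simp⟩
  | insert i s hi ih =>
    obtain ⟨g, hg, hgs⟩ := ih
    have hdisj : Disjoint (V i) (⋃ j ∈ s, V j) :=
      disjoint_iUnion₂_right.2 fun j hj => hV (ne_of_mem_of_not_mem hj hi).symm
    refine ⟨g.trans (γ i), (hg.mono ?_).trans ((hγ i).mono ?_), fun j hj x hx => ?_⟩
    · simp
    · simp
    obtain rfl | hj := Finset.mem_insert.1 hj
    · rw [Homeomorph.trans_apply, hg.apply_of_notMem (hdisj.notMem_of_mem_left hx)]
    · have hmem : γ j x ∈ V j := (hγ j).apply_mem_iff.2 hx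
      rw [Homeomorph.trans_apply, hgs j hj hx,
        (hγ i).apply_of_notMem ((hV (ne_of_mem_of_not_mem hj hi)).notMem_of_mem_left hmem)]

/-- `Φ` is a partial diffeomorphism multiplying measures by the constant `c`. -/
structure IsMeasureChart (I : ModelWithCorners ℝ E H) (J : ModelWithCorners ℝ F H')
    (μ : Measure M) (ν : Measure N) (c : ℝ≥0∞) (Φ : OpenPartialHomeomorph M N) : Prop where
  contMDiffOn : ContMDiffOn I J (⊤ : ℕ∞) Φ Φ.source
  contMDiffOn_symm : ContMDiffOn J I (⊤ : ℕ∞) Φ.symm Φ.target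
  measure_image : ∀ A ⊆ Φ.source, MeasurableSet A → ν (Φ '' A) = c * μ A

lemma contMDiff_conjExtend [T2Space N] {c : ℝ≥0∞} {Φ : OpenPartialHomeomorph M N}
    (hΦ : IsMeasureChart I J μ ν c Φ)
    {g : M ≃ₜ M} (hg : IsMeasureDiffeoOn I μ Φ.source g) :
    ContMDiff J J (⊤ : ℕ∞) (conjExtend Φ g) := by
  obtain ⟨K, hK, hKc, hgK⟩ := hg.exists_compact
  have hclosed : IsClosed (Φ '' K) := (hKc.image_of_continuousOn (Φ.continuousOn.mono hK)).isClosed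
  intro x
  by_cases hx : x ∈ Φ.target
  · have hsmooth : ContMDiffOn J J (⊤ : ℕ∞) (Φ ∘ g ∘ Φ.symm) Φ.target :=
      hΦ.contMDiffOn.comp (hg.contMDiff.comp_contMDiffOn hΦ.contMDiffOn_symm)
        fun z hz => hg.apply_mem_iff.2 (Φ.map_target hz)
    refine (hsmooth.contMDiffAt (Φ.open_target.mem_nhds hx)).congr_of_eventuallyEq ?_
    filter_upwards [Φ.open_target.mem_nhds hx] with z hz using if_pos hz
  · have hxK : x ∈ (Φ '' K)ᶜ := fun h =>
      hx (image_subset_iff.2 (hK.trans fun p hp => Φ.map_source hp) h)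
    refine contMDiffAt_id.congr_of_eventuallyEq ?_
    filter_upwards [hclosed.isOpen_compl.mem_nhds hxK] with z hz using eqOn_conjExtend_id hgK hz

lemma measurableSet_inter_preimage_of_continuousOn {X Y : Type*} [TopologicalSpace X]
    [MeasurableSpace X] [OpensMeasurableSpace X] [TopologicalSpace Y] [MeasurableSpace Y]
    [BorelSpace Y] {f : X → Y} {U : Set X} {A : Set Y} (hf : ContinuousOn f U)
    (hU : MeasurableSet U) (hA : MeasurableSet A) : MeasurableSet (U ∩ f ⁻¹' A) := by
  have hpre := hU.subtype_image ((continuousOn_iff_continuous_domRestrict.1 hf).measurable hA)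
  rwa [domRestrict_eq, preimage_comp, Subtype.image_preimage_coe] at hpre

variable [BorelSpace M] [BorelSpace N] {c : ℝ≥0∞} {Φ : OpenPartialHomeomorph M N}

lemma measurePreserving_of_conj (hΦ : IsMeasureChart I J μ ν c Φ) {G : M ≃ₜ M}
    (hG : IsMeasureDiffeoOn I μ Φ.source G) {g : N ≃ₜ N} (hconj : ∀ p ∈ Φ.source, g (Φ p) = Φ (G p))
    (hg : EqOn g id Φ.targetᶜ) : MeasurePreserving g ν ν := by
  refine ⟨g.measurable, Measure.ext fun A hA => ?_⟩
  rw [Measure.map_apply g.measurable hA]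
  have hB : MeasurableSet (Φ.source ∩ Φ ⁻¹' A) :=
    measurableSet_inter_preimage_of_continuousOn Φ.continuousOn Φ.open_source.measurableSet hA
  have hinside : g ⁻¹' A ∩ Φ.target = Φ '' (G ⁻¹' (Φ.source ∩ Φ ⁻¹' A)) := by
    ext x
    constructor
    · rintro ⟨hgx, hx⟩
      obtain ⟨p, hp, rfl⟩ := Φ.surjOn hx
      exact ⟨p, ⟨hG.apply_mem_iff.2 hp, by rwa [mem_preimage, ← hconj p hp]⟩, rfl⟩
    · rintro ⟨p, ⟨hGp, hA⟩, rfl⟩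
      have hp := hG.apply_mem_iff.1 hGp
      exact ⟨by rwa [mem_preimage, hconj p hp], Φ.map_source hp⟩
  have houtside : g ⁻¹' A \ Φ.target = A \ Φ.target := by
    ext x
    refine and_congr_left fun hx => ?_
    rw [mem_preimage, hg hx, id]
  have himage : A ∩ Φ.target = Φ '' (Φ.source ∩ Φ ⁻¹' A) := by
    rw [Φ.image_source_inter_eq', inter_comm]
    ext x
    simp +contextual [Φ.right_inv]
  rw [← measure_inter_add_sdiff _ Φ.open_target.measurableSet,
    ← measure_inter_add_sdiff A Φ.open_target.measurableSet, houtside, hinside, himage,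
    hΦ.measure_image _ inter_subset_left hB,
    hΦ.measure_image _ (fun p hp => hG.apply_mem_iff.1 hp.1) (G.measurable hB),
    hG.measurePreserving.measure_preimage hB.nullMeasurableSet]

theorem IsMeasureChart.exists_conj [T2Space N] (hΦ : IsMeasureChart I J μ ν c Φ) {U : Set M}
    (hU : U ⊆ Φ.source) {G : M ≃ₜ M} (hG : IsMeasureDiffeoOn I μ U G) : ∃ g : N ≃ₜ N,
      IsMeasureDiffeoOn J ν (Φ '' U) g ∧ ∀ p ∈ Φ.source, g (Φ p) = Φ (G p) := by
  obtain ⟨K, hK, hKc, hGK⟩ := hG.exists_compact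
  replace hG := hG.mono hU
  let g : N ≃ₜ N :=
    { toFun := conjExtend Φ G
      invFun := conjExtend Φ G.symm
      left_inv := leftInverse_conjExtend (fun _ => hG.apply_mem_iff.2) G.left_inv
      right_inv := leftInverse_conjExtend (fun _ => hG.symm.apply_mem_iff.2) G.right_inv
      continuous_toFun := (contMDiff_conjExtend hΦ hG).continuous
      continuous_invFun := (contMDiff_conjExtend hΦ hG.symm).continuous }
  have hconj : ∀ p ∈ Φ.source, g (Φ p) = Φ (G p) := fun p hp => conjExtend_chart_apply hp
  exact ⟨g, ⟨contMDiff_conjExtend hΦ hG, contMDiff_conjExtend hΦ hG.symm,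
    measurePreserving_of_conj hΦ hG hconj fun _ hx => conjExtend_of_notMem hx,
    Φ '' K, image_mono hK, hKc.image_of_continuousOn (Φ.continuousOn.mono (hK.trans hU)),
    eqOn_conjExtend_id hGK⟩, hconj⟩

end MeasureDiffeo

section PlaneTwist

lemma measurePreserving_of_det_fderiv_eq_one {E : Type*} [NormedAddCommGroup E] [NormedSpace ℝ E]
    [FiniteDimensional ℝ E] [MeasurableSpace E] [BorelSpace E] (μ : Measure E) [μ.IsAddHaarMeasure]
    {G : E ≃ₜ E} {G' : E → E →L[ℝ] E} (hG : ∀ p, HasFDerivAt G (G' p) p)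
    (hdet : ∀ p, (G' p).det = 1) : MeasurePreserving G μ μ := by
  have hsymm : MeasurePreserving G.symm μ μ := by
    refine ⟨G.symm.measurable, Measure.ext fun A hA => ?_⟩
    rw [Measure.map_apply G.symm.measurable hA, ← Homeomorph.image_eq_preimage_symm,
      ← lintegral_abs_det_fderiv_eq_addHaar_image μ hA
        (fun p _ => (hG p).hasFDerivWithinAt) G.injective.injOn]
    simp [hdet]
  exact hsymm.symm (e := G.symm.toMeasurableEquiv)

/-- The linear map of the plane with matrix `!![a, b; c, d]`. -/
noncomputable def planeMatrix (a b c d : ℝ) : ℝ × ℝ →L[ℝ] ℝ × ℝ :=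
  (a • ContinuousLinearMap.fst ℝ ℝ ℝ + b • ContinuousLinearMap.snd ℝ ℝ ℝ).prod
    (c • ContinuousLinearMap.fst ℝ ℝ ℝ + d • ContinuousLinearMap.snd ℝ ℝ ℝ)

lemma det_planeMatrix (a b c d : ℝ) : (planeMatrix a b c d).det = a * d - b * c := by
  rw [planeMatrix, ← Matrix.toLin_finTwoProd_toContinuousLinearMap,
    LinearMap.det_toContinuousLinearMap, LinearMap.det_toLin, Matrix.det_fin_two_of]

/-- The map rotating each circle centred at the origin by an angle `ρ` of its squared radius. -/
noncomputable def radialTwist (ρ : ℝ → ℝ) (p : ℝ × ℝ) : ℝ × ℝ :=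
  (cos (ρ (p.1 ^ 2 + p.2 ^ 2)) * p.1 - sin (ρ (p.1 ^ 2 + p.2 ^ 2)) * p.2,
   sin (ρ (p.1 ^ 2 + p.2 ^ 2)) * p.1 + cos (ρ (p.1 ^ 2 + p.2 ^ 2)) * p.2)

variable {ρ : ℝ → ℝ} {p : ℝ × ℝ}

lemma radialTwist_eq_self (h : ρ (p.1 ^ 2 + p.2 ^ 2) = 0) : radialTwist ρ p = p := by
  simp [radialTwist, h]

lemma radialTwist_eq_neg (h : ρ (p.1 ^ 2 + p.2 ^ 2) = π) : radialTwist ρ p = -p := by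
  ext <;> simp [radialTwist, h]

variable (ρ p) in
lemma radialTwist_fst_sq_add_snd_sq :
    (radialTwist ρ p).1 ^ 2 + (radialTwist ρ p).2 ^ 2 = p.1 ^ 2 + p.2 ^ 2 := by
  simp only [radialTwist]
  linear_combination (p.1 ^ 2 + p.2 ^ 2) * sin_sq_add_cos_sq (ρ (p.1 ^ 2 + p.2 ^ 2))

variable (ρ) in
lemma leftInverse_radialTwist_neg : Function.LeftInverse (radialTwist (-ρ)) (radialTwist ρ) := by
  intro p
  have hone := sin_sq_add_cos_sq (ρ (p.1 ^ 2 + p.2 ^ 2))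
  rw [radialTwist, radialTwist_fst_sq_add_snd_sq, Pi.neg_apply, cos_neg, sin_neg]
  simp only [radialTwist]
  ext <;> simp only
  · linear_combination p.1 * hone
  · linear_combination p.2 * hone

lemma contDiff_radialTwist {n : ℕ∞} (hρ : ContDiff ℝ n ρ) : ContDiff ℝ n (radialTwist ρ) := by
  unfold radialTwist
  fun_prop

lemma hasFDerivAt_radialTwist {ρ' : ℝ} (hρ : HasDerivAt ρ ρ' (p.1 ^ 2 + p.2 ^ 2)) :
    HasFDerivAt (radialTwist ρ) (planeMatrix
      (cos (ρ (p.1 ^ 2 + p.2 ^ 2)) - (radialTwist ρ p).2 * (2 * p.1 * ρ'))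
      (-sin (ρ (p.1 ^ 2 + p.2 ^ 2)) - (radialTwist ρ p).2 * (2 * p.2 * ρ'))
      (sin (ρ (p.1 ^ 2 + p.2 ^ 2)) + (radialTwist ρ p).1 * (2 * p.1 * ρ'))
      (cos (ρ (p.1 ^ 2 + p.2 ^ 2)) + (radialTwist ρ p).1 * (2 * p.2 * ρ'))) p := by
  have hfst : HasFDerivAt (fun q : ℝ × ℝ => q.1) (.fst ℝ ℝ ℝ) p := hasFDerivAt_fst
  have hsnd : HasFDerivAt (fun q : ℝ × ℝ => q.2) (.snd ℝ ℝ ℝ) p := hasFDerivAt_snd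
  have hangle : HasFDerivAt (fun q : ℝ × ℝ => ρ (q.1 ^ 2 + q.2 ^ 2)) _ p :=
    hρ.comp_hasFDerivAt p ((hfst.pow 2).add (hsnd.pow 2))
  refine HasFDerivAt.congr_fderiv (((hangle.cos.mul hfst).sub (hangle.sin.mul hsnd)).prodMk
    ((hangle.sin.mul hfst).add (hangle.cos.mul hsnd))) ?_
  ext <;> simp [planeMatrix, radialTwist] <;> ring

/-- `radialTwist` as a homeomorphism of the plane. -/
noncomputable def radialTwistHomeomorph (hρ : Continuous ρ) : (ℝ × ℝ) ≃ₜ (ℝ × ℝ) where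
  toFun := radialTwist ρ
  invFun := radialTwist (-ρ)
  left_inv := leftInverse_radialTwist_neg ρ
  right_inv p := by simpa only [neg_neg] using leftInverse_radialTwist_neg (-ρ) p
  continuous_toFun := (contDiff_radialTwist (n := 0) (contDiff_zero.2 hρ)).continuous
  continuous_invFun := (contDiff_radialTwist (n := 0) (contDiff_zero.2 hρ.neg)).continuous

lemma measurePreserving_radialTwist (hρ : Differentiable ℝ ρ) :
    MeasurePreserving (radialTwistHomeomorph hρ.continuous) := by
  refine measurePreserving_of_det_fderiv_eq_one volume
    (fun p => hasFDerivAt_radialTwist (hρ _).hasDerivAt) fun p => ?_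
  rw [det_planeMatrix]
  simp only [radialTwist]
  linear_combination sin_sq_add_cos_sq (ρ (p.1 ^ 2 + p.2 ^ 2))

lemma exists_contDiff_eq_pi_eq_zero {r s : ℝ} (hrs : r < s) : ∃ ρ : ℝ → ℝ,
    ContDiff ℝ (⊤ : ℕ∞) ρ ∧ (∀ t ≤ r, ρ t = π) ∧ ∀ t, s < t → ρ t = 0 := by
  have hpos : 0 < s - r := sub_pos.2 hrs
  refine ⟨fun t => π * (1 - smoothTransition ((t - r) / (s - r))),
    contDiff_const.mul (contDiff_const.sub (smoothTransition.contDiff.comp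
      (contDiff_id.sub contDiff_const |>.div_const _))),
    fun t ht => ?_, fun t ht => ?_⟩
  · simp [smoothTransition.zero_of_nonpos (div_nonpos_of_nonpos_of_nonneg (sub_nonpos.2 ht)
      hpos.le)]
  · simp [smoothTransition.one_of_one_le ((one_le_div hpos).2 (sub_le_sub_right ht.le r))]

/-- The open unit disc, for the Euclidean norm. -/
def unitDisc : Set (ℝ × ℝ) := {p | p.1 ^ 2 + p.2 ^ 2 < 1}

lemma isOpen_unitDisc : IsOpen unitDisc := isOpen_lt (by fun_prop) continuous_const

lemma setOf_fst_sq_add_snd_sq_le_one_subset :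
    {p : ℝ × ℝ | p.1 ^ 2 + p.2 ^ 2 ≤ 1} ⊆ Icc (-1) 1 := by
  rintro ⟨x, y⟩ (hp : x ^ 2 + y ^ 2 ≤ 1)
  have hx := abs_le.1 ((sq_le_one_iff_abs_le_one x).1 (by nlinarith [sq_nonneg y]))
  have hy := abs_le.1 ((sq_le_one_iff_abs_le_one y).1 (by nlinarith [sq_nonneg x]))
  exact ⟨⟨hx.1, hy.1⟩, ⟨hx.2, hy.2⟩⟩

lemma isCompact_setOf_fst_sq_add_snd_sq_le {s : ℝ} (hs : s ≤ 1) :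
    IsCompact {p : ℝ × ℝ | p.1 ^ 2 + p.2 ^ 2 ≤ s} :=
  isCompact_Icc.of_isClosed_subset (isClosed_le (by fun_prop) continuous_const)
    (Subset.trans (fun _ hp => le_trans hp hs) setOf_fst_sq_add_snd_sq_le_one_subset)

lemma exists_isMeasureDiffeoOn_unitDisc_eqOn_neg {K : Set (ℝ × ℝ)} (hK : IsCompact K)
    (hKdisc : K ⊆ unitDisc) : ∃ G : (ℝ × ℝ) ≃ₜ (ℝ × ℝ),
      IsMeasureDiffeoOn 𝓘(ℝ, ℝ × ℝ) volume unitDisc G ∧ EqOn G Neg.neg K := by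
  obtain ⟨c, hc, hKc⟩ := hK.exists_forall_le' (f := fun p : ℝ × ℝ => 1 - (p.1 ^ 2 + p.2 ^ 2))
    (by fun_prop) fun p hp => sub_pos.2 (hKdisc hp)
  obtain ⟨s, hcs, hs⟩ := exists_between (sub_lt_self 1 hc)
  obtain ⟨ρ, hρ, hpi, hzero⟩ := exists_contDiff_eq_pi_eq_zero hcs
  refine ⟨radialTwistHomeomorph hρ.continuous, ⟨(contDiff_radialTwist hρ).contMDiff,
    (contDiff_radialTwist (ρ := -ρ) hρ.neg).contMDiff,
    measurePreserving_radialTwist (hρ.differentiable (by simp)), _, fun p hp => ?_,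
    isCompact_setOf_fst_sq_add_snd_sq_le hs.le,
    fun p hp => radialTwist_eq_self (hzero _ (not_le.1 hp))⟩,
    fun p hp => radialTwist_eq_neg (hpi _ (le_sub_comm.1 (hKc p hp)))⟩
  exact lt_of_le_of_lt hp hs

end PlaneTwist

section DiscChart

/-- The area of the part of the unit disc between the vertical diameter and the vertical chord at
abscissa `sin u`. -/
noncomputable def discArea (u : ℝ) : ℝ := u + sin u * cos u

lemma contDiff_discArea {n : ℕ∞} : ContDiff ℝ n discArea := by
  unfold discArea
  fun_prop

lemma discArea_neg (u : ℝ) : discArea (-u) = -discArea u := by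
  simp only [discArea, sin_neg, cos_neg]
  ring

lemma discArea_pi_div_two : discArea (π / 2) = π / 2 := by simp [discArea]

lemma hasDerivAt_discArea (u : ℝ) : HasDerivAt discArea (2 * cos u ^ 2) u := by
  refine ((hasDerivAt_id u).add ((hasDerivAt_sin u).mul (hasDerivAt_cos u))).congr_deriv ?_
  linear_combination -sin_sq_add_cos_sq u

lemma strictMono_discArea : StrictMono discArea := by
  intro a b hab
  have hsub : discArea b - discArea a = (b - a) + sin (b - a) * cos (b + a) := by
    rw [sin_sub, cos_add]
    simp only [discArea]
    linear_combination (-sin b * cos b) * sin_sq_add_cos_sq a +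
      (sin a * cos a) * sin_sq_add_cos_sq b
  have hsin : |sin (b - a)| < b - a := by
    simpa only [abs_of_pos (sub_pos.2 hab)] using abs_sin_lt_abs (sub_ne_zero.2 hab.ne')
  have hprod : |sin (b - a) * cos (b + a)| < b - a := by
    rw [abs_mul]
    exact (mul_le_of_le_one_right (abs_nonneg _) (abs_cos_le_one _)).trans_lt hsin
  linarith [(abs_lt.1 hprod).1]

lemma surjective_discArea : Function.Surjective discArea := by
  have hbound (u : ℝ) : |sin u * cos u| ≤ 1 := by
    rw [abs_mul]
    exact mul_le_one₀ (abs_sin_le_one u) (abs_nonneg _) (abs_cos_le_one u)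
  refine (contDiff_discArea (n := 0)).continuous.surjective ?_ ?_
  · refine tendsto_atTop_mono (f := fun u => u - 1) (fun u => ?_)
      (tendsto_atTop_add_const_right _ _ tendsto_id)
    simp only [discArea]
    linarith [(abs_le.1 (hbound u)).1]
  · refine tendsto_atBot_mono (f := fun u => u + 1) (fun u => ?_)
      (tendsto_atBot_add_const_right _ _ tendsto_id)
    simp only [discArea]
    linarith [(abs_le.1 (hbound u)).2]

/-- `discArea` as a homeomorphism of the line. -/
noncomputable def discAreaHomeomorph : ℝ ≃ₜ ℝ :=
  (strictMono_discArea.orderIsoOfSurjective discArea surjective_discArea).toHomeomorph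

lemma discArea_mem_Ioo_iff {u : ℝ} :
    discArea u ∈ Ioo (-(π / 2)) (π / 2) ↔ u ∈ Ioo (-(π / 2)) (π / 2) := by
  have hneg : discArea (-(π / 2)) = -(π / 2) := by rw [discArea_neg, discArea_pi_div_two]
  have hlt (s t : ℝ) := strictMono_discArea.lt_iff_lt (a := s) (b := t)
  have hleft := hlt (-(π / 2)) u
  have hright := hlt u (π / 2)
  rw [hneg] at hleft
  rw [discArea_pi_div_two] at hright
  exact and_congr hleft hright

lemma discAreaHomeomorph_symm_mem_Ioo {t : ℝ} (ht : t ∈ Ioo (-(π / 2)) (π / 2)) :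
    discAreaHomeomorph.symm t ∈ Ioo (-(π / 2)) (π / 2) := by
  have harea : discArea (discAreaHomeomorph.symm t) = t := discAreaHomeomorph.apply_symm_apply t
  rwa [← discArea_mem_Ioo_iff, harea]

lemma contDiffAt_discAreaHomeomorph_symm {n : ℕ∞} {t : ℝ} (ht : t ∈ Ioo (-(π / 2)) (π / 2)) :
    ContDiffAt ℝ n discAreaHomeomorph.symm t := by
  have hcos := cos_pos_of_mem_Ioo (discAreaHomeomorph_symm_mem_Ioo ht)
  exact discAreaHomeomorph.toOpenPartialHomeomorph.contDiffAt_symm_deriv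
    (f₀' := 2 * cos (discAreaHomeomorph.symm t) ^ 2) (by positivity) (mem_univ _)
    (hasDerivAt_discArea _) contDiff_discArea.contDiffAt

/-- The open rectangle with opposite corners `a` and `b`. -/
def openRect (a b : ℝ × ℝ) : Set (ℝ × ℝ) := Ioo a.1 b.1 ×ˢ Ioo a.2 b.2

lemma isOpen_openRect (a b : ℝ × ℝ) : IsOpen (openRect a b) := isOpen_Ioo.prod isOpen_Ioo

lemma fst_mem_Ioo_of_mem_unitDisc {p : ℝ × ℝ} (hp : p ∈ unitDisc) : p.1 ∈ Ioo (-1) 1 :=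
  abs_lt.1 ((sq_lt_one_iff_abs_lt_one _).1
    ((le_add_of_nonneg_right (sq_nonneg p.2)).trans_lt hp))

lemma arcsin_mem_Ioo {x : ℝ} (hx : x ∈ Ioo (-1) 1) : arcsin x ∈ Ioo (-(π / 2)) (π / 2) :=
  ⟨neg_pi_div_two_lt_arcsin.2 hx.1, arcsin_lt_pi_div_two.2 hx.2⟩

/-- The chart mapping the unit disc onto the rectangle with centre `c` and half-sides `r` which
preserves vertical lines and is affine on each of them, and multiplies areas by a constant. -/
noncomputable def discToRect (c r p : ℝ × ℝ) : ℝ × ℝ :=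
  (c.1 + r.1 * (2 / π * discArea (arcsin p.1)), c.2 + r.2 * (p.2 / √(1 - p.1 ^ 2)))

/-- The inverse of `discToRect`. -/
noncomputable def rectToDisc (c r p : ℝ × ℝ) : ℝ × ℝ :=
  (sin (discAreaHomeomorph.symm ((p.1 - c.1) / r.1 * (π / 2))),
    (p.2 - c.2) / r.2 * cos (discAreaHomeomorph.symm ((p.1 - c.1) / r.1 * (π / 2))))

lemma discToRect_neg (c r p : ℝ × ℝ) : discToRect c r (-p) = (2 : ℝ) • c - discToRect c r p := by
  ext <;> simp only [discToRect, Prod.fst_neg, Prod.snd_neg, arcsin_neg, discArea_neg, neg_sq,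
    Prod.fst_sub, Prod.snd_sub, Prod.smul_fst, Prod.smul_snd, smul_eq_mul] <;> ring

variable {c r p : ℝ × ℝ}

lemma add_mul_mem_Ioo_iff {c r t : ℝ} (hr : 0 < r) : c + r * t ∈ Ioo (c - r) (c + r) ↔ |t| < 1 := by
  rw [abs_lt, mem_Ioo]
  constructor <;> rintro ⟨h₁, h₂⟩ <;> constructor <;> nlinarith

lemma discToRect_mem_openRect (hr₁ : 0 < r.1) (hr₂ : 0 < r.2) (hp : p ∈ unitDisc) :
    discToRect c r p ∈ openRect (c - r) (c + r) := by
  have hx := fst_mem_Ioo_of_mem_unitDisc hp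
  have hsqrt := sqrt_one_sub_sq_pos hx
  have harea : |discArea (arcsin p.1)| < π / 2 :=
    abs_lt.2 (discArea_mem_Ioo_iff.2 (arcsin_mem_Ioo hx))
  refine ⟨(add_mul_mem_Ioo_iff hr₁).2 ?_, (add_mul_mem_Ioo_iff hr₂).2 ?_⟩
  · rw [abs_mul, abs_of_pos (by positivity), div_mul_eq_mul_div, div_lt_one pi_pos]
    linarith
  · rw [abs_div, abs_of_pos hsqrt, div_lt_one hsqrt]
    refine abs_lt_of_sq_lt_sq ?_ hsqrt.le
    rw [sq_sqrt (sqrt_pos.1 hsqrt).le]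
    exact lt_sub_iff_add_lt'.2 hp

lemma abs_sub_div_lt_one {c r x : ℝ} (hr : 0 < r) (hx : x ∈ Ioo (c - r) (c + r)) :
    |(x - c) / r| < 1 := by
  rw [← add_mul_mem_Ioo_iff hr (c := c), mul_div_cancel₀ _ hr.ne', add_sub_cancel]
  exact hx

lemma discAreaHomeomorph_symm_mem_Ioo_of_mem_openRect (hr₁ : 0 < r.1)
    (hp : p ∈ openRect (c - r) (c + r)) :
    (p.1 - c.1) / r.1 * (π / 2) ∈ Ioo (-(π / 2)) (π / 2) := by
  have h := abs_lt.1 (abs_sub_div_lt_one hr₁ hp.1)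
  constructor <;> nlinarith [pi_pos]

lemma rectToDisc_mem_unitDisc (hr₁ : 0 < r.1) (hr₂ : 0 < r.2)
    (hp : p ∈ openRect (c - r) (c + r)) : rectToDisc c r p ∈ unitDisc := by
  have hcos := cos_pos_of_mem_Ioo (discAreaHomeomorph_symm_mem_Ioo
    (discAreaHomeomorph_symm_mem_Ioo_of_mem_openRect hr₁ hp))
  have hy : ((p.2 - c.2) / r.2) ^ 2 < 1 :=
    (sq_lt_one_iff_abs_lt_one _).2 (abs_sub_div_lt_one hr₂ hp.2)
  simp only [unitDisc, rectToDisc, mem_ofPred_eq, mul_pow]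
  rw [← sin_sq_add_cos_sq (discAreaHomeomorph.symm ((p.1 - c.1) / r.1 * (π / 2))),
    add_lt_add_iff_left]
  exact mul_lt_of_lt_one_left (pow_pos hcos 2) hy

lemma rectToDisc_discToRect (hr₁ : 0 < r.1) (hr₂ : 0 < r.2) (hp : p ∈ unitDisc) :
    rectToDisc c r (discToRect c r p) = p := by
  have hx := fst_mem_Ioo_of_mem_unitDisc hp
  have hsqrt := sqrt_one_sub_sq_pos hx
  have hangle : discAreaHomeomorph.symm ((c.1 + r.1 * (2 / π * discArea (arcsin p.1)) - c.1) / r.1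
      * (π / 2)) = arcsin p.1 := by
    rw [discAreaHomeomorph.symm_apply_eq]
    change _ = discArea _
    field_simp
    ring
  simp only [rectToDisc, discToRect, hangle, sin_arcsin hx.1.le hx.2.le, cos_arcsin]
  ext <;> simp only
  field_simp
  ring

lemma discToRect_rectToDisc (hr₁ : 0 < r.1) (hr₂ : 0 < r.2)
    (hp : p ∈ openRect (c - r) (c + r)) : discToRect c r (rectToDisc c r p) = p := by
  have hu := discAreaHomeomorph_symm_mem_Ioo
    (discAreaHomeomorph_symm_mem_Ioo_of_mem_openRect hr₁ hp)
  have harea (t : ℝ) : discArea (discAreaHomeomorph.symm t) = t :=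
    discAreaHomeomorph.apply_symm_apply t
  simp only [rectToDisc, discToRect, arcsin_sin hu.1.le hu.2.le, harea,
    ← cos_eq_sqrt_one_sub_sin_sq hu.1.le hu.2.le,
    mul_div_cancel_right₀ _ (cos_pos_of_mem_Ioo hu).ne']
  ext <;> simp only <;> field_simp <;> ring

lemma contDiffOn_discToRect (c r : ℝ × ℝ) {n : ℕ∞} : ContDiffOn ℝ n (discToRect c r) unitDisc := by
  intro p hp
  have hx := fst_mem_Ioo_of_mem_unitDisc hp
  have hsqrt := sqrt_one_sub_sq_pos hx
  have harcsin : ContDiffAt ℝ n (fun q : ℝ × ℝ => arcsin q.1) p :=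
    (contDiffAt_arcsin hx.1.ne' hx.2.ne).comp p contDiffAt_fst
  have hdenom : ContDiffAt ℝ n (fun q : ℝ × ℝ => √(1 - q.1 ^ 2)) p :=
    (contDiffAt_sqrt (sqrt_pos.1 hsqrt).ne').comp p (by fun_prop)
  exact ((contDiffAt_const.add (contDiffAt_const.mul (contDiffAt_const.mul
    (contDiff_discArea.contDiffAt.comp p harcsin)))).prodMk
    (contDiffAt_const.add (contDiffAt_const.mul
      (contDiffAt_snd.div hdenom hsqrt.ne')))).contDiffWithinAt

lemma contDiffOn_rectToDisc (hr₁ : 0 < r.1) {n : ℕ∞} :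
    ContDiffOn ℝ n (rectToDisc c r) (openRect (c - r) (c + r)) := by
  intro p hp
  have hangle : ContDiffAt ℝ n
      (fun q : ℝ × ℝ => discAreaHomeomorph.symm ((q.1 - c.1) / r.1 * (π / 2))) p :=
    (contDiffAt_discAreaHomeomorph_symm
      (discAreaHomeomorph_symm_mem_Ioo_of_mem_openRect hr₁ hp)).comp p (by fun_prop)
  have hheight : ContDiffAt ℝ n (fun q : ℝ × ℝ => (q.2 - c.2) / r.2) p := by fun_prop
  exact (hangle.sin.prodMk (hheight.mul hangle.cos)).contDiffWithinAt

lemma hasFDerivAt_discToRect (c r : ℝ × ℝ) (hp : p ∈ unitDisc) :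
    HasFDerivAt (discToRect c r) (planeMatrix (r.1 * (2 / π) * (2 * √(1 - p.1 ^ 2))) 0
      (r.2 * p.2 * p.1 / √(1 - p.1 ^ 2) ^ 3) (r.2 / √(1 - p.1 ^ 2))) p := by
  have hx := fst_mem_Ioo_of_mem_unitDisc hp
  have hsqrt := sqrt_one_sub_sq_pos hx
  have hfst : HasFDerivAt (fun q : ℝ × ℝ => q.1) (.fst ℝ ℝ ℝ) p := hasFDerivAt_fst
  have hsnd : HasFDerivAt (fun q : ℝ × ℝ => q.2) (.snd ℝ ℝ ℝ) p := hasFDerivAt_snd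
  have harea : HasFDerivAt (fun q : ℝ × ℝ => discArea (arcsin q.1)) _ p :=
    ((hasDerivAt_discArea _).comp p.1
      (hasDerivAt_arcsin hx.1.ne' hx.2.ne)).comp_hasFDerivAt p hfst
  have hdenom : HasFDerivAt (fun q : ℝ × ℝ => √(1 - q.1 ^ 2)) _ p :=
    ((hfst.pow 2).const_sub 1).sqrt (sqrt_pos.1 hsqrt).ne'
  have hinv : HasFDerivAt (fun q : ℝ × ℝ => (√(1 - q.1 ^ 2))⁻¹) _ p :=
    (hasDerivAt_inv hsqrt.ne').comp_hasFDerivAt p hdenom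
  refine HasFDerivAt.congr_fderiv ((((harea.const_mul (2 / π)).const_mul r.1).const_add c.1).prodMk
    (((hsnd.mul hinv).const_mul r.2).const_add c.2)) ?_
  ext <;> simp [planeMatrix, cos_arcsin] <;> field_simp

lemma volume_discToRect_image (hr₁ : 0 < r.1) (hr₂ : 0 < r.2) {A : Set (ℝ × ℝ)}
    (hA : A ⊆ unitDisc) (hAm : MeasurableSet A) :
    volume (discToRect c r '' A) = ENNReal.ofReal (4 * r.1 * r.2 / π) * volume A := by
  rw [← lintegral_abs_det_fderiv_eq_addHaar_image volume hAm
    (fun p hp => (hasFDerivAt_discToRect c r (hA hp)).hasFDerivWithinAt)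
    (LeftInvOn.injOn fun p hp => rectToDisc_discToRect hr₁ hr₂ (hA hp)), ← setLIntegral_const]
  refine setLIntegral_congr_fun hAm fun p hp => ?_
  have hsqrt := sqrt_one_sub_sq_pos (fst_mem_Ioo_of_mem_unitDisc (hA hp))
  have hdet : r.1 * (2 / π) * (2 * √(1 - p.1 ^ 2)) * (r.2 / √(1 - p.1 ^ 2)) - 0 *
      (r.2 * p.2 * p.1 / √(1 - p.1 ^ 2) ^ 3) = 4 * r.1 * r.2 / π := by
    field_simp
    ring
  simp only [det_planeMatrix, hdet]
  rw [abs_of_pos (by positivity)]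

/-- `discToRect` as a chart with source the unit disc. -/
noncomputable def discRectChart (hr₁ : 0 < r.1) (hr₂ : 0 < r.2) (c : ℝ × ℝ) :
    OpenPartialHomeomorph (ℝ × ℝ) (ℝ × ℝ) where
  toFun := discToRect c r
  invFun := rectToDisc c r
  source := unitDisc
  target := openRect (c - r) (c + r)
  map_source' _ := discToRect_mem_openRect hr₁ hr₂
  map_target' _ := rectToDisc_mem_unitDisc hr₁ hr₂
  left_inv' _ := rectToDisc_discToRect hr₁ hr₂
  right_inv' _ := discToRect_rectToDisc hr₁ hr₂
  open_source := isOpen_unitDisc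
  open_target := isOpen_openRect _ _
  continuousOn_toFun := (contDiffOn_discToRect c r (n := 0)).continuousOn
  continuousOn_invFun := (contDiffOn_rectToDisc hr₁ (n := 0)).continuousOn

lemma isMeasureChart_discRectChart (hr₁ : 0 < r.1) (hr₂ : 0 < r.2) (c : ℝ × ℝ) :
    IsMeasureChart 𝓘(ℝ, ℝ × ℝ) 𝓘(ℝ, ℝ × ℝ) volume volume (ENNReal.ofReal (4 * r.1 * r.2 / π))
      (discRectChart hr₁ hr₂ c) :=
  ⟨(contDiffOn_discToRect c r).contMDiffOn, (contDiffOn_rectToDisc hr₁).contMDiffOn,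
    fun _ => volume_discToRect_image hr₁ hr₂⟩

theorem exists_isMeasureDiffeoOn_openRect_eq_sub {a b : ℝ × ℝ} (h₁ : a.1 < b.1) (h₂ : a.2 < b.2)
    {κ : ℝ≥0∞} (hκ : κ ≠ 0) : ∃ G : (ℝ × ℝ) ≃ₜ (ℝ × ℝ),
      IsMeasureDiffeoOn 𝓘(ℝ, ℝ × ℝ) volume (openRect a b) G ∧
      volume {p ∈ openRect a b | G p ≠ a + b - p} ≤ κ := by
  let c := (2⁻¹ : ℝ) • (a + b)
  let r := (2⁻¹ : ℝ) • (b - a)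
  have hr₁ : 0 < r.1 := mul_pos (by norm_num) (sub_pos.2 h₁)
  have hr₂ : 0 < r.2 := mul_pos (by norm_num) (sub_pos.2 h₂)
  have hrect : openRect a b = openRect (c - r) (c + r) := by
    congr 1 <;> ext <;> simp [c, r] <;> ring
  have hcenter : a + b = (2 : ℝ) • c := by simp [c]
  rw [hrect, hcenter]
  have hchart := isMeasureChart_discRectChart hr₁ hr₂ c
  have hdisc : volume unitDisc ≠ ∞ :=
    measure_ne_top_of_subset (fun p (hp : p ∈ unitDisc) => hp.out.le)
      (isCompact_setOf_fst_sq_add_snd_sq_le le_rfl).measure_ne_top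
  obtain ⟨K, hKdisc, hK, hKvol⟩ := isOpen_unitDisc.measurableSet.exists_isCompact_sdiff_lt hdisc
    (ENNReal.div_pos hκ (ENNReal.ofReal_ne_top (r := 4 * r.1 * r.2 / π))).ne'
  obtain ⟨T, hT, hTK⟩ := exists_isMeasureDiffeoOn_unitDisc_eqOn_neg hK hKdisc
  obtain ⟨G, hG, hconj⟩ := hchart.exists_conj subset_rfl hT
  refine ⟨G, hG.mono (discRectChart hr₁ hr₂ c).image_source_eq_target.subset, ?_⟩
  have hbad : {p ∈ openRect (c - r) (c + r) | G p ≠ (2 : ℝ) • c - p} ⊆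
      discToRect c r '' (unitDisc \ K) := by
    rintro _ ⟨hp, hne⟩
    obtain ⟨q, hq, rfl⟩ := (discRectChart hr₁ hr₂ c).surjOn hp
    refine ⟨q, ⟨hq, fun hqK => hne ?_⟩, rfl⟩
    rw [hconj q hq, hTK hqK]
    exact discToRect_neg c r q
  calc volume {p ∈ openRect (c - r) (c + r) | G p ≠ (2 : ℝ) • c - p}
      ≤ volume (discToRect c r '' (unitDisc \ K)) := measure_mono hbad
    _ = ENNReal.ofReal (4 * r.1 * r.2 / π) * volume (unitDisc \ K) :=
        hchart.measure_image _ sdiff_subset (isOpen_unitDisc.measurableSet.diff hK.measurableSet)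
    _ ≤ ENNReal.ofReal (4 * r.1 * r.2 / π) * (κ / ENNReal.ofReal (4 * r.1 * r.2 / π)) := by
        gcongr
    _ ≤ κ := ENNReal.mul_div_le

end DiscChart

section GridPermutations

theorem submonoid_perm_eq_top_of_preconnected {V : Type*} [Finite V] [DecidableEq V]
    {Γ : SimpleGraph V} (hΓ : Γ.Preconnected) {S : Submonoid (Equiv.Perm V)}
    (hS : ∀ a b, Γ.Adj a b → Equiv.swap a b ∈ S) : S = ⊤ := by
  have hwalk {a b : V} (h : Γ.Walk a b) : Equiv.swap a b ∈ S := by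
    induction h with
    | nil => rw [Equiv.swap_self]; exact S.one_mem
    | @cons a b c hadj _ ih =>
      obtain rfl | hac := eq_or_ne a c
      · rw [Equiv.swap_self]; exact S.one_mem
      · rw [Equiv.swap_comm, ← Equiv.swap_mul_swap_mul_swap hadj.ne hac]
        exact S.mul_mem (S.mul_mem ih (hS _ _ hadj)) ih
  rw [eq_top_iff, ← Equiv.Perm.mclosure_isSwap, Submonoid.closure_le]
  rintro _ ⟨a, b, -, rfl⟩
  exact (hΓ a b).elim hwalk

section RealizablePerms

variable {E H : Type*} [NormedAddCommGroup E] [NormedSpace ℝ E] [TopologicalSpace H]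
  {M : Type*} [TopologicalSpace M] [ChartedSpace H M] [MeasurableSpace M] [BorelSpace M]
  {ι : Type*}

lemma measure_iUnion_sdiff_preimage_trans_le {μ : Measure M} (B : ι → Set M)
    {G G' : M ≃ₜ M} (hG : MeasurePreserving G μ μ) (τ σ : Equiv.Perm ι) :
    μ (⋃ b, B b \ G.trans G' ⁻¹' B ((σ * τ) b)) ≤
      μ (⋃ b, B b \ G ⁻¹' B (τ b)) + μ (⋃ b, B b \ G' ⁻¹' B (σ b)) := by
  rw [← hG.measure_preimage_emb G.measurableEmbedding (⋃ b, B b \ G' ⁻¹' B (σ b))]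
  refine (measure_mono (iUnion_subset ?_)).trans (measure_union_le _ _)
  rintro b x ⟨hxb, hx⟩
  by_cases hGx : G x ∈ B (τ b)
  · exact Or.inr (mem_iUnion.2 ⟨τ b, hGx, hx⟩)
  · exact Or.inl (mem_iUnion.2 ⟨b, hxb, hGx⟩)

/-- The permutations of the index set of a family of sets `B` which are induced, up to errors of
arbitrarily small measure, by measure preserving diffeomorphisms supported in `U`. -/
def realizablePerms (I : ModelWithCorners ℝ E H) (μ : Measure M) (U : Set M)
    (B : ι → Set M) : Submonoid (Equiv.Perm ι) where
  carrier := {σ | ∀ κ : ℝ≥0∞, κ ≠ 0 → ∃ G : M ≃ₜ M, IsMeasureDiffeoOn I μ U G ∧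
    μ (⋃ b, B b \ G ⁻¹' B (σ b)) ≤ κ}
  one_mem' κ _ := ⟨.refl M, .refl U, by simp⟩
  mul_mem' {σ τ} hσ hτ κ hκ := by
    obtain ⟨G, hG, hGκ⟩ := hτ (κ / 2) (ENNReal.half_pos hκ).ne'
    obtain ⟨G', hG', hGκ'⟩ := hσ (κ / 2) (ENNReal.half_pos hκ).ne'
    refine ⟨G.trans G', hG.trans hG', ?_⟩
    calc
      _ ≤ _ := measure_iUnion_sdiff_preimage_trans_le B hG.measurePreserving τ σ
      _ ≤ κ / 2 + κ / 2 := add_le_add hGκ hGκ'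
      _ = κ := ENNReal.add_halves κ

end RealizablePerms

/-- The `k`-th of the `n` equal open subintervals of the unit interval. -/
def gridInterval {n : ℕ} (k : Fin n) : Set ℝ := Ioo (k / n : ℝ) ((k + 1) / n)

/-- The boxes of the partition of the unit square into `m` columns and `n` rows. -/
def gridBox {m n : ℕ} (b : Fin m × Fin n) : Set (ℝ × ℝ) := gridInterval b.1 ×ˢ gridInterval b.2

lemma mem_gridInterval_iff {n : ℕ} {k : Fin n} {x : ℝ} :
    x ∈ gridInterval k ↔ (k : ℝ) < n * x ∧ n * x < k + 1 := by
  have hn : (0 : ℝ) < n := Nat.cast_pos.2 k.pos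
  rw [gridInterval, mem_Ioo, div_lt_iff₀' hn, lt_div_iff₀' hn]

lemma add_sub_mem_gridInterval {n : ℕ} {j k : Fin n} {x : ℝ} :
    (x ∈ gridInterval j → (j / n + (k + 1) / n - x : ℝ) ∈ gridInterval k) ∧
      (x ∈ gridInterval k → (j / n + (k + 1) / n - x : ℝ) ∈ gridInterval j) := by
  simp only [gridInterval, mem_Ioo, add_div]
  constructor <;> rintro ⟨h₁, h₂⟩ <;> constructor <;> linarith

lemma gridInterval_subset_Ioo {n : ℕ} {i j k : Fin n} (hij : i ≤ j) (hjk : j ≤ k) :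
    gridInterval j ⊆ Ioo (i / n : ℝ) ((k + 1) / n) :=
  Ioo_subset_Ioo (by gcongr; exact_mod_cast hij) (by gcongr; exact_mod_cast hjk)

lemma mem_Icc_of_mem_gridInterval {n : ℕ} {i j k : Fin n} {x : ℝ} (hx : x ∈ gridInterval j)
    (hx' : x ∈ Ioo (i / n : ℝ) ((k + 1) / n)) : j ∈ Icc i k := by
  have hn : (0 : ℝ) < n := Nat.cast_pos.2 j.pos
  rw [mem_Ioo, div_lt_iff₀' hn, lt_div_iff₀' hn] at hx'
  rw [mem_gridInterval_iff] at hx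
  have h₁ : (i : ℝ) < j + 1 := hx'.1.trans hx.2
  have h₂ : (j : ℝ) < k + 1 := hx.1.trans hx'.2
  norm_cast at h₁ h₂
  exact ⟨Nat.lt_succ_iff.1 h₁, Nat.lt_succ_iff.1 h₂⟩

lemma gridInterval_subset_Ioo_zero_one {n : ℕ} (k : Fin n) : gridInterval k ⊆ Ioo 0 1 :=
  Ioo_subset_Ioo (by positivity) (div_le_one_of_le₀ (by exact_mod_cast k.2) (by positivity))

/-- The smallest open rectangle containing the grid boxes `a` and `b`, for `a ≤ b`. -/
def gridBlock {m n : ℕ} (a b : Fin m × Fin n) : Set (ℝ × ℝ) :=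
  openRect (a.1 / m, a.2 / n) ((b.1 + 1) / m, (b.2 + 1) / n)

variable {m n : ℕ} {a b c : Fin m × Fin n}

lemma gridBlock_subset_openRect : gridBlock a b ⊆ openRect 0 1 :=
  prod_mono
    (Ioo_subset_Ioo (by positivity) (div_le_one_of_le₀ (by exact_mod_cast b.1.2) (by positivity)))
    (Ioo_subset_Ioo (by positivity) (div_le_one_of_le₀ (by exact_mod_cast b.2.2) (by positivity)))

/-- The half-turn of the block formed by two adjacent boxes exchanges them. -/
lemma swap_mem_realizablePerms_of_covBy (hab : a ⋖ b) :
    Equiv.swap a b ∈ realizablePerms 𝓘(ℝ, ℝ × ℝ) volume (openRect 0 1)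
      (gridBox (m := m) (n := n)) := by
  intro κ hκ
  have hm : (0 : ℝ) < m := Nat.cast_pos.2 a.1.pos
  have hn : (0 : ℝ) < n := Nat.cast_pos.2 a.2.pos
  have hle₁ : (a.1 : ℝ) ≤ b.1 := by exact_mod_cast hab.le.1
  have hle₂ : (a.2 : ℝ) ≤ b.2 := by exact_mod_cast hab.le.2
  obtain ⟨G, hG, hGκ⟩ := exists_isMeasureDiffeoOn_openRect_eq_sub
    (a := (a.1 / m, a.2 / n)) (b := ((b.1 + 1) / m, (b.2 + 1) / n))
    (by dsimp only; gcongr; linarith) (by dsimp only; gcongr; linarith) hκ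
  refine ⟨G, hG.mono gridBlock_subset_openRect, (measure_mono (iUnion_subset ?_)).trans hGκ⟩
  rintro c p ⟨hpc, hGp⟩
  by_cases hp : p ∈ gridBlock a b
  · refine ⟨hp, fun hrot => hGp ?_⟩
    have hc₁ := mem_Icc_of_mem_gridInterval hpc.1 hp.1
    have hc₂ := mem_Icc_of_mem_gridInterval hpc.2 hp.2
    rw [mem_preimage, hrot]
    obtain rfl | rfl := hab.eq_or_eq ⟨hc₁.1, hc₂.1⟩ ⟨hc₁.2, hc₂.2⟩
    · rw [Equiv.swap_apply_left]
      exact ⟨add_sub_mem_gridInterval.1 hpc.1, add_sub_mem_gridInterval.1 hpc.2⟩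
    · rw [Equiv.swap_apply_right]
      exact ⟨add_sub_mem_gridInterval.2 hpc.1, add_sub_mem_gridInterval.2 hpc.2⟩
  · refine absurd ?_ hGp
    have hne (d : Fin m × Fin n) (hd : a ≤ d ∧ d ≤ b) : c ≠ d := by
      rintro rfl
      exact hp ⟨gridInterval_subset_Ioo hd.1.1 hd.2.1 hpc.1,
        gridInterval_subset_Ioo hd.1.2 hd.2.2 hpc.2⟩
    rw [mem_preimage, hG.apply_of_notMem hp,
      Equiv.swap_apply_of_ne_of_ne (hne a ⟨le_rfl, hab.le⟩) (hne b ⟨hab.le, le_rfl⟩)]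
    exact hpc

theorem realizablePerms_gridBox_eq_top (m n : ℕ) :
    realizablePerms 𝓘(ℝ, ℝ × ℝ) volume (openRect 0 1) (gridBox (m := m) (n := n)) = ⊤ := by
  have hconn : (SimpleGraph.hasse (Fin m × Fin n)).Preconnected := by
    rw [SimpleGraph.hasse_prod]
    exact (SimpleGraph.pathGraph_preconnected m).boxProd (SimpleGraph.pathGraph_preconnected n)
  refine submonoid_perm_eq_top_of_preconnected hconn fun a b hab => ?_
  obtain hab | hba := hab
  · exact swap_mem_realizablePerms_of_covBy hab
  · exact Equiv.swap_comm b a ▸ swap_mem_realizablePerms_of_covBy hba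

end GridPermutations

section DigitShuffle

/-- Weighting `x` by `2⁻¹` to the number of agreements makes the sum over `x` factorize. -/
lemma card_agree_le_le {I D : Type*} [Fintype I] [DecidableEq I] [Fintype D] [DecidableEq D]
    (t : I → D) (k : ℕ) :
    (Finset.card {x : I → D | Finset.card {i | x i = t i} ≤ k} : ℝ) ≤
      2 ^ k * (Fintype.card D - 2⁻¹ : ℝ) ^ Fintype.card I := by
  have hsum : ∑ x : I → D, (2⁻¹ : ℝ) ^ Finset.card {i | x i = t i} =
      (Fintype.card D - 2⁻¹ : ℝ) ^ Fintype.card I := by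
    have hfactor (i : I) : ∑ d, (if d = t i then 2⁻¹ else 1 : ℝ) = Fintype.card D - 2⁻¹ := by
      have hterm (d : D) : (if d = t i then 2⁻¹ else 1 : ℝ) = 1 - if d = t i then 2⁻¹ else 0 := by
        split_ifs <;> norm_num
      simp [hterm]
    calc
      _ = ∑ x : I → D, ∏ i, (if x i = t i then 2⁻¹ else 1 : ℝ) := by
        simp [Finset.prod_ite]
      _ = ∏ i, ∑ d, (if d = t i then 2⁻¹ else 1 : ℝ) := by
        rw [Finset.prod_univ_sum, Fintype.piFinset_univ]
      _ = _ := by simp [hfactor]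
  rw [← hsum, ← div_le_iff₀' (by positivity), div_eq_mul_inv, ← inv_pow, ← nsmul_eq_mul,
    ← Finset.sum_const]
  refine (Finset.sum_le_sum fun x hx => ?_).trans
    (Finset.sum_le_sum_of_subset_of_nonneg (Finset.subset_univ _) fun x _ _ => by positivity)
  exact pow_le_pow_of_le_one (by norm_num) (by norm_num) (Finset.mem_filter.1 hx).2

lemma exists_equiv_fst_eq_and_snd_fst_eq {I D K S : Type*} [Fintype I] [Fintype D]
    [Fintype K] [Fintype S]
    (hcard : Fintype.card S = Fintype.card D ^ (Fintype.card I - 1) * Fintype.card K) :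
    ∃ e : I × (I → D) × K ≃ I × D × S, ∀ i x k, (e (i, x, k)).1 = i ∧ (e (i, x, k)).2.1 = x i := by
  classical
  have hrest (i : I) : Nonempty (({j // j ≠ i} → D) × K ≃ S) := by
    rw [← Fintype.card_eq, hcard, Fintype.card_prod, Fintype.card_fun, Fintype.card_subtype_compl,
      Fintype.card_subtype_eq]
  let split (i : I) : (I → D) × K ≃ D × S :=
    ((Equiv.funSplitAt i D).prodCongr (.refl K)).trans <|
      (Equiv.prodAssoc _ _ _).trans ((Equiv.refl D).prodCongr (hrest i).some)
  exact ⟨Equiv.prodShear (.refl I) split, fun i x k => ⟨rfl, rfl⟩⟩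

/-- The index, in the grid with `m * p` columns and `n * r` rows, of the box in position `d` of the
`p × r` subdivision of box `b` of the grid with `m` columns and `n` rows. -/
def gridRefine {m n p r : ℕ} :
    (Fin m × Fin n) × (Fin p × Fin r) ≃ Fin (m * p) × Fin (n * r) :=
  (Equiv.prodProdProdComm _ _ _ _).trans (finProdFinEquiv.prodCongr finProdFinEquiv)

lemma gridInterval_finProdFinEquiv_subset {n p : ℕ} (i : Fin n) (k : Fin p) :
    gridInterval (finProdFinEquiv (i, k)) ⊆ gridInterval i := by
  intro x hx
  have hp : (0 : ℝ) < p := Nat.cast_pos.2 k.pos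
  have hk : (k + 1 : ℝ) ≤ p := by exact_mod_cast k.2
  rw [mem_gridInterval_iff, finProdFinEquiv_apply_val] at hx
  push_cast at hx
  rw [mem_gridInterval_iff]
  constructor <;> nlinarith [hx.1, hx.2, (k : ℕ).cast_nonneg (α := ℝ)]

lemma gridBox_gridRefine_subset {m n p r : ℕ} (b : Fin m × Fin n) (d : Fin p × Fin r) :
    gridBox (gridRefine (b, d)) ⊆ gridBox b :=
  prod_mono (gridInterval_finProdFinEquiv_subset _ _) (gridInterval_finProdFinEquiv_subset _ _)

/-- The `b`-th row of the fine grid encodes a family of digits `(row b).1`; the permutation places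
the box in column `a` of that row at the position given by the digit of index `col a`. -/
theorem exists_perm_gridBox_subset {m p r w : ℕ} (hm : 0 < m) (hp : 0 < p) (hr : 0 < r)
    (hw : 0 < w) : ∃ H : ℕ, 0 < H ∧ ∃ (col : Fin (m * p * w) ≃ Fin m × Fin (p * w))
      (row : Fin (p * w * r * H) ≃ (Fin m × Fin (p * w) → Fin p × Fin r) × Fin w)
      (σ : Equiv.Perm (Fin (m * p * w) × Fin (p * w * r * H))),
      ∀ a b, gridBox (σ (a, b)) ⊆ gridBox (gridRefine (col a, (row b).1 (col a))) := by
  let H := (p * r) ^ (m * (p * w) - 1)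
  have hH : (p * r) * H = (p * r) ^ (m * (p * w)) := mul_pow_sub_one (by positivity) _
  obtain ⟨e, he⟩ := exists_equiv_fst_eq_and_snd_fst_eq (I := Fin m × Fin (p * w))
    (D := Fin p × Fin r) (K := Fin w) (S := Fin w × Fin H)
    (by simp only [Fintype.card_prod, Fintype.card_fin]; ring)
  obtain ⟨col⟩ : Nonempty (Fin (m * p * w) ≃ Fin m × Fin (p * w)) :=
    Fintype.card_eq.1 (by simp only [Fintype.card_prod, Fintype.card_fin]; ring)
  obtain ⟨row⟩ : Nonempty
      (Fin (p * w * r * H) ≃ (Fin m × Fin (p * w) → Fin p × Fin r) × Fin w) :=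
    Fintype.card_eq.1 (by
      simp only [Fintype.card_prod, Fintype.card_fin, Fintype.card_fun, ← hH]; ring)
  refine ⟨H, by positivity, col, row, (col.prodCongr row).trans <| e.trans <|
    (Equiv.prodAssoc _ _ _).symm.trans ((gridRefine.prodCongr (.refl _)).trans gridRefine), ?_⟩
  intro a b
  obtain ⟨hfst, hsnd⟩ := he (col a) (row b).1 (row b).2
  refine (gridBox_gridRefine_subset _ _).trans_eq ?_
  congr 3
  exact Prod.ext hfst hsnd

end DigitShuffle

section RowSeparation

lemma abs_sub_sub_mul_le_one_of_mem_gridInterval {n : ℕ} {j k : Fin n} {x y : ℝ} {N : ℤ}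
    (hx : x ∈ gridInterval j) (hy : y ∈ gridInterval k) (hxy : |x - y - N| < 1 / n) :
    |(j : ℤ) - k - n * N| ≤ 1 := by
  have hn : (0 : ℝ) < n := Nat.cast_pos.2 j.pos
  rw [lt_div_iff₀' hn, ← abs_of_pos hn, ← abs_mul, abs_lt] at hxy
  rw [mem_gridInterval_iff] at hx hy
  have hlt : ((|(j : ℤ) - k - n * N| : ℤ) : ℝ) < (2 : ℤ) := by
    push_cast
    rw [abs_lt]
    constructor <;> nlinarith
  exact Int.lt_add_one_iff.1 (Int.cast_lt.1 hlt)

/-- The digit looked for in another row: it lies in the second of the four columns, at least two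
rows away from `d` and away from the boundary of the `4 × 8` subdivision. -/
def shiftDigit (d : Fin 4 × Fin 8) : Fin 4 × Fin 8 := if (d.2 : ℕ) < 4 then (1, 5) else (1, 2)

/-- Points at distance less than one fine box from each other lie in the same coarse box, because
a shifted digit is interior; there, the two digits are too far apart vertically. -/
lemma le_abs_sub_sub_of_mem_gridBox_shiftDigit {m n : ℕ} (x : Fin m × Fin n → Fin 4 × Fin 8)
    {i i' : Fin m × Fin n} {z z' : ℝ × ℝ} (hz : z ∈ gridBox (gridRefine (i, x i)))
    (hz' : z' ∈ gridBox (gridRefine (i', shiftDigit (x i')))) (N : ℤ)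
    (hvert : |z.2 - z'.2| < 1 / (n * 8 : ℕ)) : 1 / (m * 4 : ℕ) ≤ |z.1 - z'.1 - N| := by
  by_contra! hhor
  have hcol := abs_sub_sub_mul_le_one_of_mem_gridInterval hz.1 hz'.1 hhor
  have hrow := abs_sub_sub_mul_le_one_of_mem_gridInterval (N := 0) hz.2 hz'.2 (by simpa using hvert)
  simp only [gridRefine, Equiv.trans_apply, Equiv.prodProdProdComm_apply, Equiv.prodCongr_apply,
    Prod.map_apply, finProdFinEquiv_apply_val, abs_le] at hcol hrow
  push_cast at hcol hrow
  have hfst : ((shiftDigit (x i')).1 : ℕ) = 1 := by unfold shiftDigit; split_ifs <;> rfl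
  have hsnd : ((x i').2 : ℕ) < 4 ∧ ((shiftDigit (x i')).2 : ℕ) = 5 ∨
      4 ≤ ((x i').2 : ℕ) ∧ ((shiftDigit (x i')).2 : ℕ) = 2 := by
    unfold shiftDigit
    split_ifs with h
    · exact .inl ⟨h, rfl⟩
    · exact .inr ⟨not_lt.1 h, rfl⟩
  have hN : N = 0 := by
    by_contra hN
    have hm : (m : ℤ) ≤ m * |N| := le_mul_of_one_le_right (by positivity) (Int.one_le_abs hN)
    rcases abs_choice N with hN' | hN' <;> rw [hN'] at hm <;>
      [skip; rw [mul_neg] at hm] <;> rw [mul_right_comm] at hcol <;> omega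
  subst hN
  obtain rfl : i = i' := Prod.ext (Fin.ext (by omega)) (Fin.ext (by omega))
  omega

section GridMeasure

variable {n : ℕ}

lemma measurableSet_gridInterval (k : Fin n) : MeasurableSet (gridInterval k) := measurableSet_Ioo

lemma isOpen_gridBox {m : ℕ} (b : Fin m × Fin n) : IsOpen (gridBox b) :=
  isOpen_Ioo.prod isOpen_Ioo

lemma pairwise_disjoint_gridInterval :
    Pairwise (Function.onFun Disjoint (gridInterval (n := n))) := by
  intro j k hjk
  refine disjoint_left.2 fun x hj hk => hjk (Fin.ext ?_)
  rw [mem_gridInterval_iff] at hj hk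
  have h₁ : (j : ℝ) < k + 1 := hj.1.trans hk.2
  have h₂ : (k : ℝ) < j + 1 := hk.1.trans hj.2
  norm_cast at h₁ h₂
  omega

lemma volume_biUnion_gridInterval (T : Finset (Fin n)) :
    volume (⋃ k ∈ T, gridInterval k) = ENNReal.ofReal (T.card / n) := by
  rw [measure_biUnion_finset (fun j _ k _ h => pairwise_disjoint_gridInterval h)
    fun k _ => measurableSet_gridInterval k]
  have hvol (k : Fin n) : volume (gridInterval k) = ENNReal.ofReal (1 / n) := by
    rw [gridInterval, Real.volume_Ioo, ← sub_div, add_sub_cancel_left]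
  rw [Finset.sum_congr rfl fun k _ => hvol k, Finset.sum_const, nsmul_eq_mul,
    ← ENNReal.ofReal_natCast, ← ENNReal.ofReal_mul (by positivity), mul_one_div]

lemma volume_Ioo_sdiff_iUnion_gridInterval [NeZero n] :
    volume (Ioo 0 1 \ ⋃ k : Fin n, gridInterval k) = 0 := by
  have hfull : volume (⋃ k : Fin n, gridInterval k) = 1 := by
    simpa [NeZero.ne n] using volume_biUnion_gridInterval (n := n) Finset.univ
  rw [measure_sdiff (iUnion_subset gridInterval_subset_Ioo_zero_one)
    (MeasurableSet.iUnion measurableSet_gridInterval).nullMeasurableSet (by simp [hfull]), hfull]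
  simp

end GridMeasure

lemma measure_setOf_le_measure_section_le {α β : Type*} [MeasurableSpace α] [MeasurableSpace β]
    (μ : Measure α) (ν : Measure β) [SFinite μ] [SFinite ν] {B : Set (α × β)}
    (hB : MeasurableSet B) {c : ℝ≥0∞} (hc : c ≠ 0) (hc_top : c ≠ ∞) :
    ν {y | c ≤ μ {x | (x, y) ∈ B}} ≤ μ.prod ν B / c := by
  rw [Measure.prod_apply_symm hB]
  exact meas_ge_le_lintegral_div (measurable_measure_prodMk_right hB).aemeasurable hc hc_top

/-- The images under `G` of the segments of heights `u` and `u'` are quantitatively apart: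
most of the first and a definite proportion of the second are at vertical distance at least `δ.2`
or, modulo `1`, at horizontal distance at least `δ.1` from each other. -/
def SeparatesRows (G : ℝ × ℝ → ℝ × ℝ) (δ : ℝ × ℝ) (u u' : ℝ) : Prop :=
  ∃ X ⊆ Ioo (0 : ℝ) 1, ∃ X' ⊆ Ioo (0 : ℝ) 1,
    volume (Ioo 0 1 \ X) ≤ ENNReal.ofReal (1 / 256) ∧ ENNReal.ofReal (1 / 128) ≤ volume X' ∧
    ∀ x ∈ X, ∀ x' ∈ X', ∀ N : ℤ, |(G (x, u)).2 - (G (x', u')).2| < δ.2 →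
      δ.1 ≤ |(G (x, u)).1 - (G (x', u')).1 - N|

section

variable {k l m n : ℕ}

/-- The points which `G` does not send to the box prescribed by the permutation `σ`. -/
def misplaced (G : ℝ × ℝ → ℝ × ℝ) (σ : Equiv.Perm (Fin k × Fin l)) : Set (ℝ × ℝ) :=
  ⋃ b, gridBox b \ G ⁻¹' gridBox (σ b)

lemma measurableSet_misplaced {G : ℝ × ℝ → ℝ × ℝ} (hG : Continuous G)
    (σ : Equiv.Perm (Fin k × Fin l)) : MeasurableSet (misplaced G σ) :=
  .iUnion fun b => (isOpen_gridBox b).measurableSet.diff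
    ((isOpen_gridBox (σ b)).preimage hG).measurableSet

lemma separatesRows_of_le_card_agree [NeZero k] {G : ℝ × ℝ → ℝ × ℝ}
    {col : Fin k ≃ Fin m × Fin n} {digits : Fin l → Fin m × Fin n → Fin 4 × Fin 8}
    {σ : Equiv.Perm (Fin k × Fin l)}
    (hσ : ∀ a b, gridBox (σ (a, b)) ⊆ gridBox (gridRefine (col a, digits b (col a))))
    {b b' : Fin l} {u u' : ℝ} (hu : u ∈ gridInterval b) (hu' : u' ∈ gridInterval b')
    (hbad : volume {x | (x, u) ∈ misplaced G σ} ≤ ENNReal.ofReal (1 / 256))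
    (hbad' : volume {x | (x, u') ∈ misplaced G σ} ≤ ENNReal.ofReal (1 / 256))
    (hcard : k ≤ 64 * Finset.card {i | digits b' i = shiftDigit (digits b i)}) :
    SeparatesRows G (1 / (m * 4 : ℕ), 1 / (n * 8 : ℕ)) u u' := by
  have hmem {a c v x} (hv : v ∈ gridInterval c) (hx : x ∈ gridInterval a)
      (hxv : x ∉ {x | (x, v) ∈ misplaced G σ}) :
      G (x, v) ∈ gridBox (gridRefine (col a, digits c (col a))) := by
    by_contra hGx
    exact hxv (mem_iUnion.2 ⟨(a, c), ⟨hx, hv⟩, fun h => hGx (hσ a c h)⟩)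
  let T : Finset (Fin k) := {a | digits b' (col a) = shiftDigit (digits b (col a))}
  have hT : T.card = Finset.card {i | digits b' i = shiftDigit (digits b i)} :=
    Finset.card_equiv col fun a => by simp [T]
  refine ⟨(⋃ a : Fin k, gridInterval a) \ {x | (x, u) ∈ misplaced G σ},
    sdiff_subset.trans (iUnion_subset gridInterval_subset_Ioo_zero_one),
    (⋃ a ∈ T, gridInterval a) \ {x | (x, u') ∈ misplaced G σ},
    sdiff_subset.trans (iUnion₂_subset fun a _ => gridInterval_subset_Ioo_zero_one a),
    ?_, ?_, ?_⟩
  · rw [sdiff_sdiff_right]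
    refine (measure_union_le _ _).trans ?_
    rw [volume_Ioo_sdiff_iUnion_gridInterval, zero_add]
    exact (measure_mono inter_subset_right).trans hbad
  · have hk : (0 : ℝ) < k := Nat.cast_pos.2 (NeZero.pos k)
    have hTk : (k : ℝ) ≤ 64 * T.card := by rw [hT]; exact_mod_cast hcard
    refine le_trans ?_ (le_measure_sdiff.trans' (tsub_le_tsub_left hbad' _))
    rw [volume_biUnion_gridInterval, ← ENNReal.ofReal_sub _ (by norm_num)]
    refine ENNReal.ofReal_le_ofReal ?_
    have : (1 / 64 : ℝ) ≤ T.card / k := by rw [div_le_div_iff₀ (by norm_num) hk]; linarith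
    linarith
  · rintro x ⟨hx, hxu⟩ x' ⟨hx', hxu'⟩ N hvert
    obtain ⟨a, ha⟩ := mem_iUnion.1 hx
    obtain ⟨a', ha'T, ha'⟩ := mem_iUnion₂.1 hx'
    have hz' := hmem hu' ha' hxu'
    rw [(Finset.mem_filter.1 ha'T).2] at hz'
    exact le_abs_sub_sub_of_mem_gridBox_shiftDigit (digits b) (hmem hu ha hxu) hz' N hvert

end

/-- A fraction `1 / 64` of agreements with a given family is half the expected number, so all but
an exponentially small proportion of the rows have more. -/
lemma card_agree_le_le_three_fourths_pow {I R : Type*} [Fintype I] [Fintype R] {v w : ℕ}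
    (hI : Fintype.card I = 64 * v ^ 2) (row : R ≃ (I → Fin 4 × Fin 8) × Fin w)
    (t : I → Fin 4 × Fin 8) :
    (Finset.card {b | Finset.card {i | (row b).1 i = t i} ≤ v ^ 2} : ℝ) ≤
      (3 / 4) ^ v ^ 2 * Fintype.card R := by
  classical
  let few : Finset (I → Fin 4 × Fin 8) := {x | Finset.card {i | x i = t i} ≤ v ^ 2}
  have hprod : Finset.card {b | Finset.card {i | (row b).1 i = t i} ≤ v ^ 2} = few.card * w :=
    calc
      _ = (few ×ˢ (Finset.univ : Finset (Fin w))).card :=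
        Finset.card_equiv row fun b => by simp [few]
      _ = few.card * w := by rw [Finset.card_product, Finset.card_fin]
  have hR : Fintype.card R = 32 ^ (64 * v ^ 2) * w := by
    rw [Fintype.card_congr row, Fintype.card_prod, Fintype.card_fun, hI]
    simp
  rw [hprod, hR]
  push_cast
  rw [← mul_assoc]
  gcongr
  refine (card_agree_le_le t (v ^ 2)).trans ?_
  rw [hI, pow_mul, pow_mul, ← mul_pow, ← mul_pow]
  norm_num [pow_le_pow_left₀]

lemma volume_Ioo_sdiff_iUnion_gridInterval_sdiff_le {n : ℕ} [NeZero n] {B : Set (ℝ × ℝ)}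
    (hB : MeasurableSet B) {c κ : ℝ≥0∞} (hc : c ≠ 0) (hc' : c ≠ ∞) (hBκ : volume B ≤ κ * c) :
    volume (Ioo 0 1 \ ((⋃ k : Fin n, gridInterval k) \ {u | c ≤ volume {x | (x, u) ∈ B}})) ≤
      κ := by
  rw [sdiff_sdiff_right]
  refine (measure_union_le _ _).trans ?_
  rw [volume_Ioo_sdiff_iUnion_gridInterval, zero_add]
  exact (measure_mono inter_subset_right).trans <|
    (measure_setOf_le_measure_section_le _ _ hB hc hc').trans (ENNReal.div_le_of_le_mul hBκ)

theorem exists_isMeasureDiffeoOn_separatesRows {v : ℕ} (hv : 0 < v) {κ : ℝ≥0∞} (hκ : κ ≠ 0) :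
    ∃ G : ℝ × ℝ ≃ₜ ℝ × ℝ, IsMeasureDiffeoOn 𝓘(ℝ, ℝ × ℝ) volume (openRect 0 1) G ∧
      ∃ Y ⊆ Ioo (0 : ℝ) 1, volume (Ioo 0 1 \ Y) ≤ κ ∧ ∀ u ∈ Y,
        volume {u' ∈ Y | ¬ SeparatesRows G (1 / (32 * v), 1 / (64 * v)) u u'} ≤
          ENNReal.ofReal ((3 / 4) ^ v ^ 2) := by
  obtain ⟨H, hH, col, row, σ, hσ⟩ := exists_perm_gridBox_subset (m := 8 * v) (p := 4) (r := 8)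
    (w := 2 * v) (by positivity) (by norm_num) (by norm_num) (by positivity)
  have : NeZero (8 * v * 4 * (2 * v)) := ⟨by positivity⟩
  have : NeZero (4 * (2 * v) * 8 * H) := ⟨by positivity⟩
  have hc : ENNReal.ofReal (1 / 256) ≠ 0 := by simp
  obtain ⟨G, hG, hGσ⟩ := (realizablePerms_gridBox_eq_top _ _ ▸ Submonoid.mem_top σ :
    σ ∈ realizablePerms 𝓘(ℝ, ℝ × ℝ) volume (openRect 0 1) gridBox)
    (κ * ENNReal.ofReal (1 / 256)) (mul_ne_zero hκ hc)
  let Y := (⋃ b : Fin (4 * (2 * v) * 8 * H), gridInterval b) \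
    {u | ENNReal.ofReal (1 / 256) ≤ volume {x | (x, u) ∈ misplaced G σ}}
  refine ⟨G, hG, Y, sdiff_subset.trans (iUnion_subset gridInterval_subset_Ioo_zero_one),
    volume_Ioo_sdiff_iUnion_gridInterval_sdiff_le (measurableSet_misplaced G.continuous σ) hc
      ENNReal.ofReal_ne_top hGσ, ?_⟩
  rintro u ⟨hu, hbad⟩
  obtain ⟨b, hb⟩ := mem_iUnion.1 hu
  let T : Finset (Fin (4 * (2 * v) * 8 * H)) :=
    {b' | Finset.card {i | (row b').1 i = shiftDigit ((row b).1 i)} ≤ v ^ 2}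
  have hsub : {u' ∈ Y | ¬ SeparatesRows G (1 / (32 * v), 1 / (64 * v)) u u'} ⊆
      ⋃ b' ∈ T, gridInterval b' := by
    rintro u' ⟨⟨hu', hbad'⟩, hsep⟩
    obtain ⟨b', hb'⟩ := mem_iUnion.1 hu'
    refine mem_iUnion₂.2 ⟨b', Finset.mem_filter.2 ⟨Finset.mem_univ _, ?_⟩, hb'⟩
    by_contra! hcard
    have := separatesRows_of_le_card_agree hσ hb hb' (not_le.1 hbad).le
      (not_le.1 hbad').le (by nlinarith)
    refine hsep ?_
    convert this using 2 <;> push_cast <;> ring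
  refine (measure_mono hsub).trans ?_
  rw [volume_biUnion_gridInterval]
  refine ENNReal.ofReal_le_ofReal (div_le_of_le_mul₀ (by positivity) (by positivity) ?_)
  refine (card_agree_le_le_three_fourths_pow ?_ row _).trans_eq (by rw [Fintype.card_fin])
  simp only [Fintype.card_prod, Fintype.card_fin]
  ring

end RowSeparation

section CylindricalChart

/-- The projection of the sphere to the equatorial plane, turned by a half-turn to bring the
meridian of longitude `0` to the branch cut of `Complex.arg`. -/
noncomputable def equatorialTurned (x : E³) : ℂ := -(x 0 + x 1 * Complex.I)

lemma contDiff_equatorialTurned {n : WithTop ℕ∞} : ContDiff ℝ n equatorialTurned := by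
  have hcoord (i : Fin 3) : ContDiff ℝ n fun x : E³ => (x i : ℂ) :=
    Complex.ofRealCLM.contDiff.comp (by fun_prop)
  exact ((hcoord 0).add ((hcoord 1).mul contDiff_const)).neg

lemma equatorialTurned_piS (θ y : ℝ) : equatorialTurned (piS θ y) =
    √(1 - y ^ 2) * (Complex.cos (2 * π * θ - π : ℝ) + Complex.sin (2 * π * θ - π : ℝ) *
      Complex.I) := by
  rw [equatorialTurned, piS_zero, piS_one, ← Complex.ofReal_cos, ← Complex.ofReal_sin,
    cos_sub_pi, sin_sub_pi]
  push_cast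
  ring

/-- The longitude, in `(0, 1]`, and the height of a point. -/
noncomputable def cylindricalInv (x : E³) : ℝ × ℝ :=
  (1 / 2 + (equatorialTurned x).arg / (2 * π), x 2)

lemma contDiffAt_cylindricalInv {x : E³} (hx : equatorialTurned x ∈ Complex.slitPlane)
    {n : WithTop ℕ∞} : ContDiffAt ℝ n cylindricalInv x := by
  have hlog : ContDiffAt ℝ n (fun z => Complex.log (equatorialTurned z)) x :=
    ((Complex.contDiffAt_log hx).restrict_scalars ℝ).comp x contDiff_equatorialTurned.contDiffAt
  have harg : ContDiffAt ℝ n (fun z => (equatorialTurned z).arg) x := by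
    simpa only [Function.comp_def, Complex.imCLM_apply, Complex.log_im] using
      Complex.imCLM.contDiff.contDiffAt.comp x hlog
  have hheight : ContDiff ℝ n fun z : E³ => z 2 := by fun_prop
  exact (contDiffAt_const.add (harg.div_const _)).prodMk hheight.contDiffAt

variable {p : ℝ × ℝ}

lemma cylindricalInv_cylindrical (hp : p ∈ openRect (0, -1) (1, 1)) :
    equatorialTurned (cylindrical p) ∈ Complex.slitPlane ∧ cylindricalInv (cylindrical p) = p := by
  obtain ⟨⟨hθ₀, hθ₁⟩, hy⟩ := hp
  have hsqrt := sqrt_one_sub_sq_pos hy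
  have hlow : -π < 2 * π * p.1 - π := by nlinarith [pi_pos]
  have hhigh : 2 * π * p.1 - π < π := by nlinarith [pi_pos]
  have harg : (equatorialTurned (cylindrical p)).arg = 2 * π * p.1 - π := by
    rw [coe_cylindrical (Ioo_subset_Icc_self hy), equatorialTurned_piS,
      Complex.arg_mul_cos_add_sin_mul_I hsqrt ⟨hlow, hhigh.le⟩]
  refine ⟨Complex.mem_slitPlane_iff_arg.2 ⟨harg ▸ hhigh.ne, ?_⟩, ?_⟩
  · rw [coe_cylindrical (Ioo_subset_Icc_self hy), equatorialTurned_piS, ← Complex.exp_mul_I]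
    exact mul_ne_zero (Complex.ofReal_ne_zero.2 hsqrt.ne') (Complex.exp_ne_zero _)
  · rw [cylindricalInv, harg, coe_cylindrical (Ioo_subset_Icc_self hy), piS_two]
    ext
    · field_simp
      ring
    · rfl

lemma exists_cylindrical_eq_of_mem_slitPlane {x : S²}
    (hx : equatorialTurned x ∈ Complex.slitPlane) :
    ∃ p ∈ openRect (0, -1) (1, 1), cylindrical p = x := by
  obtain ⟨θ, hθ, hcyl⟩ := exists_cylindrical_eq x
  rw [← hcyl, coe_cylindrical (height_mem_Icc x)] at hx
  have hy : (x : E³) 2 ∈ Ioo (-1 : ℝ) 1 := by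
    refine ⟨(height_mem_Icc x).1.lt_of_ne' fun h => ?_, (height_mem_Icc x).2.lt_of_ne fun h => ?_⟩
      <;> simp [h, equatorialTurned_piS, Complex.mem_slitPlane_iff] at hx
  have hcut (t : ℝ) (ht : equatorialTurned (piS t ((x : E³) 2)) ∈ Complex.slitPlane)
      (htcos : cos (2 * π * t) = 1) (htsin : sin (2 * π * t) = 0) : False := by
    rw [equatorialTurned, piS_zero, piS_one, htcos, htsin] at ht
    simp [Complex.mem_slitPlane_iff, (sqrt_nonneg _).not_gt] at ht
  refine ⟨(θ, (x : E³) 2), ⟨⟨hθ.1.lt_of_ne' ?_, hθ.2.lt_of_ne ?_⟩, hy⟩, hcyl⟩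
  · rintro rfl
    exact hcut 0 hx (by simp) (by simp)
  · rintro rfl
    exact hcut 1 hx (by simp) (by simp)

/-- The coordinates of the sphere given by longitude and height, away from the meridian of
longitude `0`. -/
noncomputable def cylindricalChart : OpenPartialHomeomorph (ℝ × ℝ) S² where
  toFun := cylindrical
  invFun x := cylindricalInv x
  source := openRect (0, -1) (1, 1)
  target := {x | equatorialTurned x ∈ Complex.slitPlane}
  map_source' _ hp := (cylindricalInv_cylindrical hp).1
  map_target' x hx := by
    obtain ⟨p, hp, rfl⟩ := exists_cylindrical_eq_of_mem_slitPlane hx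
    rwa [(cylindricalInv_cylindrical hp).2]
  left_inv' _ hp := (cylindricalInv_cylindrical hp).2
  right_inv' x hx := by
    obtain ⟨p, hp, rfl⟩ := exists_cylindrical_eq_of_mem_slitPlane hx
    rw [(cylindricalInv_cylindrical hp).2]
  open_source := isOpen_openRect _ _
  open_target := Complex.isOpen_slitPlane.preimage
    ((contDiff_equatorialTurned (n := 0)).continuous.comp continuous_subtype_val)
  continuousOn_toFun := continuous_cylindrical.continuousOn
  continuousOn_invFun x hx := ((contDiffAt_cylindricalInv (n := 0) hx).continuousAt.comp
    continuous_subtype_val.continuousAt).continuousWithinAt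

lemma exists_isMeasureChart_cylindricalChart :
    ∃ c, IsMeasureChart 𝓘(ℝ, ℝ × ℝ) (𝓡 2) volume sphereMeasure c cylindricalChart := by
  obtain ⟨c, hc⟩ := exists_sphereMeasure_cylindrical_image_eq
  refine ⟨c, fun p hp => ?_, fun x hx => ?_, fun A hA hAm => hc 0 A ?_ hAm⟩
  · have harcsin : ContDiffAt ℝ (⊤ : ℕ∞) (fun q : ℝ × ℝ => (q.1, arcsin q.2)) p :=
      contDiff_fst.contDiffAt.prodMk
        ((contDiffAt_arcsin hp.2.1.ne' hp.2.2.ne).comp p contDiff_snd.contDiffAt)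
    exact (contMDiff_geographic.contMDiffAt.comp p harcsin.contMDiffAt).contMDiffWithinAt
  · have : Fact (Module.finrank ℝ E³ = 2 + 1) := ⟨by simp⟩
    exact ((contDiffAt_cylindricalInv hx).contMDiffAt.comp x
      (contMDiff_coe_sphere x)).contMDiffWithinAt
  · rwa [zero_add]

end CylindricalChart

section Boxes

/-- The affine map taking the unit square to the rectangle with corner `a` and sides `d`. -/
def boxMap (a d p : ℝ × ℝ) : ℝ × ℝ := a + d * p

lemma volume_boxMap_image (a d : ℝ × ℝ) (A : Set (ℝ × ℝ)) :
    volume (boxMap a d '' A) = ENNReal.ofReal |d.1 * d.2| * volume A := by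
  have himage : boxMap a d '' A = (a + ·) '' (planeMatrix d.1 0 0 d.2 '' A) := by
    rw [image_image]
    refine image_congr fun p _ => ?_
    ext <;> simp [boxMap, planeMatrix]
  rw [himage, image_add_left, measure_preimage_add,
    Measure.addHaar_image_continuousLinearMap, ← ContinuousLinearMap.det, det_planeMatrix,
    mul_zero, sub_zero]

/-- `boxMap` as a chart of the rectangle with corner `a` and sides `d`. -/
noncomputable def boxChart (a : ℝ × ℝ) {d : ℝ × ℝ} (h₁ : 0 < d.1) (h₂ : 0 < d.2) :
    OpenPartialHomeomorph (ℝ × ℝ) (ℝ × ℝ) where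
  toFun := boxMap a d
  invFun q := ((q.1 - a.1) / d.1, (q.2 - a.2) / d.2)
  source := openRect 0 1
  target := openRect a (a + d)
  map_source' p hp := by
    obtain ⟨⟨h₁₀, h₁₁⟩, h₂₀, h₂₁⟩ := hp
    simp only [Prod.fst_zero, Prod.fst_one, Prod.snd_zero, Prod.snd_one] at *
    refine ⟨⟨?_, ?_⟩, ?_, ?_⟩ <;> simp [boxMap, *]
  map_target' q hq := by
    obtain ⟨⟨h₁₀, h₁₁⟩, h₂₀, h₂₁⟩ := hq
    simp only [Prod.fst_add, Prod.snd_add] at *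
    refine ⟨⟨?_, ?_⟩, ?_, ?_⟩ <;> simp [div_lt_one, sub_lt_iff_lt_add', *]
  left_inv' p _ := by ext <;> simp [boxMap, h₁.ne', h₂.ne']
  right_inv' q _ := by ext <;> simp [boxMap, mul_div_cancel₀, h₁.ne', h₂.ne']
  open_source := isOpen_openRect _ _
  open_target := isOpen_openRect _ _
  continuousOn_toFun := by unfold boxMap; fun_prop
  continuousOn_invFun := by fun_prop

lemma isMeasureChart_boxChart (a : ℝ × ℝ) {d : ℝ × ℝ} (h₁ : 0 < d.1) (h₂ : 0 < d.2) :
    IsMeasureChart 𝓘(ℝ, ℝ × ℝ) 𝓘(ℝ, ℝ × ℝ) volume volume (ENNReal.ofReal |d.1 * d.2|)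
      (boxChart a h₁ h₂) where
  contMDiffOn := by
    have : ContDiff ℝ (⊤ : ℕ∞) (boxMap a d) := by unfold boxMap; fun_prop
    exact this.contMDiff.contMDiffOn
  contMDiffOn_symm := by
    have : ContDiff ℝ (⊤ : ℕ∞) fun q : ℝ × ℝ => ((q.1 - a.1) / d.1, (q.2 - a.2) / d.2) := by
      fun_prop
    exact this.contMDiff.contMDiffOn
  measure_image A _ _ := volume_boxMap_image a d A

end Boxes

section Tiles

variable {P L : ℕ} {ρ : ℝ}

/-- The height at relative position `t` in the `s`-th of `L` equal bands of `(-ρ, ρ)`. -/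
noncomputable def bandHeight (ρ : ℝ) (s : Fin L) (t : ℝ) : ℝ := ρ * (2 * ((s + t) / L) - 1)

lemma bandHeight_sub (s : Fin L) (t t' : ℝ) :
    bandHeight ρ s t - bandHeight ρ s t' = 2 * ρ / L * (t - t') := by
  simp only [bandHeight]
  ring

lemma abs_bandHeight_lt (hρ : 0 < ρ) (s : Fin L) {t : ℝ} (ht : t ∈ Ioo (0 : ℝ) 1) :
    |bandHeight ρ s t| < ρ := by
  have hL : (0 : ℝ) < L := by exact_mod_cast s.pos
  have hgrid : (s + t) / L ∈ gridInterval s :=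
    ⟨by gcongr; linarith [ht.1], by gcongr; linarith [ht.2]⟩
  obtain ⟨h₀, h₁⟩ := gridInterval_subset_Ioo_zero_one s hgrid
  rw [bandHeight, abs_mul, abs_of_pos hρ]
  exact mul_lt_of_lt_one_right hρ (abs_lt.2 ⟨by linarith, by linarith⟩)

/-- The coordinates of the rectangular tile of the sphere in the `j`-th of `P` equal sectors of
longitude and in the `s`-th of `L` equal bands of heights between `-ρ` and `ρ`; sectors are counted
modulo `P`. -/
noncomputable def tile (P : ℕ) (ρ : ℝ) (j : ℤ) (s : Fin L) (p : ℝ × ℝ) : S² :=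
  cylindrical ((j + p.1) / P, bandHeight ρ s p.2)

lemma coe_tile (hρ : ρ ∈ Ioo 0 1) (j : ℤ) (s : Fin L) {p : ℝ × ℝ} (hp : p ∈ openRect 0 1) :
    (tile P ρ j s p : E³) = piS ((j + p.1) / P) (bandHeight ρ s p.2) := by
  obtain ⟨hlow, hhigh⟩ := abs_lt.1 ((abs_bandHeight_lt hρ.1 s hp.2).trans hρ.2)
  exact coe_cylindrical ⟨hlow.le, hhigh.le⟩

lemma tile_add_mul (hP : 0 < P) (j n : ℤ) (s : Fin L) (p : ℝ × ℝ) :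
    tile P ρ (j + P * n) s p = tile P ρ j s p := by
  have : (0 : ℝ) < P := by exact_mod_cast hP
  rw [tile, tile, ← cylindrical_add_int ((j + p.1) / P) _ n]
  congr 2
  push_cast
  field_simp
  ring

lemma exists_fin_tile_eq (hP : 0 < P) (ρ : ℝ) (j : ℤ) (s : Fin L) :
    ∃ k : Fin P, tile P ρ j s = tile P ρ k s := by
  have hP' : (0 : ℤ) < P := by exact_mod_cast hP
  lift j % P to ℕ using j.emod_nonneg hP'.ne' with k hk
  have hkP : k < P := by exact_mod_cast hk ▸ j.emod_lt_of_pos hP'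
  refine ⟨⟨k, hkP⟩, funext fun p => ?_⟩
  conv_lhs => rw [← j.emod_add_mul_ediv P, tile_add_mul hP, ← hk]

lemma cylindrical_boxMap_boxMap (b : Fin P × Fin L) (p : ℝ × ℝ) :
    cylindrical (boxMap (0, -ρ) (1, 2 * ρ) (boxMap (b.1 / P, b.2 / L) (1 / P, 1 / L) p)) =
      tile P ρ b.1 b.2 p := by
  rw [tile, bandHeight]
  congr 1
  ext <;> simp only [boxMap, Prod.fst_add, Prod.snd_add, Prod.fst_mul, Prod.snd_mul]
  · push_cast
    ring
  · ring

/-- `g` acts on each of the tiles as `G` acts on the unit square, and trivially elsewhere. -/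
structure ActsOnTiles (P L : ℕ) (ρ : ℝ) (G : ℝ × ℝ → ℝ × ℝ) (g : S² → S²) : Prop where
  mapsTo : MapsTo G (openRect 0 1) (openRect 0 1)
  apply_tile : ∀ (j : ℤ) (s : Fin L), ∀ p ∈ openRect 0 1, g (tile P ρ j s p) = tile P ρ j s (G p)
  apply_of_forall_notMem : ∀ x, (∀ (j : ℤ) (s : Fin L), x ∉ tile P ρ j s '' openRect 0 1) → g x = x

lemma image_boxMap_eq_gridBox (b : Fin P × Fin L) :
    boxMap (b.1 / P, b.2 / L) (1 / P, 1 / L) '' openRect 0 1 = gridBox b := by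
  have hP : (0 : ℝ) < P := by exact_mod_cast b.1.pos
  have hL : (0 : ℝ) < L := by exact_mod_cast b.2.pos
  have htarget := (boxChart (b.1 / P, b.2 / L) (d := (1 / P, 1 / L)) (by positivity)
    (by positivity)).image_source_eq_target
  simp only [gridBox, gridInterval, add_div]
  exact htarget

lemma pairwise_disjoint_gridBox :
    Pairwise (Function.onFun Disjoint (gridBox : Fin P × Fin L → Set (ℝ × ℝ))) := by
  intro b b' hbb'
  refine disjoint_prod.2 ?_
  by_cases h : b.1 = b'.1
  · exact .inr (pairwise_disjoint_gridInterval fun h' => hbb' (Prod.ext h h'))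
  · exact .inl (pairwise_disjoint_gridInterval h)

lemma exists_isMeasureDiffeoOn_gridBox {G : ℝ × ℝ ≃ₜ ℝ × ℝ}
    (hG : IsMeasureDiffeoOn 𝓘(ℝ, ℝ × ℝ) volume (openRect 0 1) G) (P L : ℕ) :
    ∃ Γ : ℝ × ℝ ≃ₜ ℝ × ℝ,
      IsMeasureDiffeoOn 𝓘(ℝ, ℝ × ℝ) volume (⋃ b : Fin P × Fin L, gridBox b) Γ ∧
      ∀ b : Fin P × Fin L, ∀ p ∈ openRect 0 1,
        Γ (boxMap (b.1 / P, b.2 / L) (1 / P, 1 / L) p) =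
          boxMap (b.1 / P, b.2 / L) (1 / P, 1 / L) (G p) := by
  have hcell (b : Fin P × Fin L) : ∃ γ : ℝ × ℝ ≃ₜ ℝ × ℝ,
      IsMeasureDiffeoOn 𝓘(ℝ, ℝ × ℝ) volume (gridBox b) γ ∧ ∀ p ∈ openRect 0 1,
        γ (boxMap (b.1 / P, b.2 / L) (1 / P, 1 / L) p) =
          boxMap (b.1 / P, b.2 / L) (1 / P, 1 / L) (G p) := by
    have hP : (0 : ℝ) < P := by exact_mod_cast b.1.pos
    have hL : (0 : ℝ) < L := by exact_mod_cast b.2.pos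
    rw [← image_boxMap_eq_gridBox b]
    have hchart := isMeasureChart_boxChart (b.1 / P, b.2 / L) (d := (1 / P, 1 / L))
      (by positivity) (by positivity)
    exact hchart.exists_conj subset_rfl hG
  choose γ hγ hγ_apply using hcell
  obtain ⟨Γ, hΓ, hΓγ⟩ := exists_isMeasureDiffeoOn_iUnion pairwise_disjoint_gridBox hγ
  refine ⟨Γ, hΓ, fun b p hp => ?_⟩
  rw [hΓγ b ((image_boxMap_eq_gridBox b).subset (mem_image_of_mem _ hp)), hγ_apply b p hp]

theorem exists_isMeasureDiffeoOn_actsOnTiles {G : ℝ × ℝ ≃ₜ ℝ × ℝ}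
    (hG : IsMeasureDiffeoOn 𝓘(ℝ, ℝ × ℝ) volume (openRect 0 1) G) (hP : 0 < P)
    (hρ : ρ ∈ Ioo 0 1) : ∃ g : S² ≃ₜ S²,
      IsMeasureDiffeoOn (𝓡 2) sphereMeasure univ g ∧ ActsOnTiles P L ρ G g := by
  obtain ⟨Γ, hΓ, hΓ_apply⟩ := exists_isMeasureDiffeoOn_gridBox hG P L
  have hunit : ⋃ b : Fin P × Fin L, gridBox b ⊆ openRect 0 1 := iUnion_subset fun b =>
    prod_mono (gridInterval_subset_Ioo_zero_one b.1) (gridInterval_subset_Ioo_zero_one b.2)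
  have hρ₂ : 0 < 2 * ρ := mul_pos two_pos hρ.1
  let band := boxChart (0, -ρ) (d := (1, 2 * ρ)) one_pos hρ₂
  have hband : MapsTo band (openRect 0 1) cylindricalChart.source := fun p hp =>
    prod_mono (Ioo_subset_Ioo le_rfl (zero_add _).le) (Ioo_subset_Ioo (neg_le_neg hρ.2.le)
      (by dsimp only [Prod.snd_add]; linarith [hρ.2])) (band.map_source hp)
  obtain ⟨Γ', hΓ', hΓ'_apply⟩ :=
    (isMeasureChart_boxChart (0, -ρ) (d := (1, 2 * ρ)) one_pos hρ₂).exists_conj hunit hΓ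
  obtain ⟨c, hc⟩ := exists_isMeasureChart_cylindricalChart
  obtain ⟨g, hg, hg_apply⟩ :=
    hc.exists_conj ((image_mono hunit).trans (image_subset_iff.2 hband)) hΓ'
  refine ⟨g, hg.mono (subset_univ _), fun p => hG.apply_mem_iff.2, fun j s p hp => ?_,
    fun x hx => hg.apply_of_notMem ?_⟩
  · obtain ⟨k, hk⟩ := exists_fin_tile_eq hP ρ j s
    have hcell : boxMap (k / P, s / L) (1 / P, 1 / L) p ∈ openRect 0 1 :=
      hunit (mem_iUnion.2 ⟨(k, s), (image_boxMap_eq_gridBox _).subset (mem_image_of_mem _ hp)⟩)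
    rw [hk, ← cylindrical_boxMap_boxMap (k, s), ← cylindrical_boxMap_boxMap (k, s),
      ← hΓ_apply (k, s) p hp]
    exact (hg_apply _ (hband hcell)).trans (congrArg cylindrical (hΓ'_apply _ hcell))
  · rintro ⟨_, ⟨q, hq, rfl⟩, rfl⟩
    obtain ⟨b, hb⟩ := mem_iUnion.1 hq
    obtain ⟨p, hp, rfl⟩ := (image_boxMap_eq_gridBox b).superset hb
    exact hx b.1 b.2 ⟨p, hp, (cylindrical_boxMap_boxMap b p).symm⟩

end Tiles

section SphereMetric

variable {θ θ' y y' : ℝ}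

lemma dist_piS_sq : dist (piS θ y) (piS θ' y') ^ 2 =
    (√(1 - y ^ 2) - √(1 - y' ^ 2)) ^ 2 + (y - y') ^ 2 +
      4 * √(1 - y ^ 2) * √(1 - y' ^ 2) * sin (π * (θ - θ')) ^ 2 := by
  have hdouble : 1 - 2 * sin (π * (θ - θ')) ^ 2 =
      cos (2 * π * θ) * cos (2 * π * θ') + sin (2 * π * θ) * sin (2 * π * θ') := by
    rw [← cos_sub, ← cos_two_mul_eq_one_sub]
    congr 1
    ring
  rw [EuclideanSpace.dist_eq, sq_sqrt (by positivity), Fin.sum_univ_three]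
  simp only [Real.dist_eq, sq_abs, piS_zero, piS_one, piS_two]
  linear_combination √(1 - y ^ 2) ^ 2 * sin_sq_add_cos_sq (2 * π * θ) +
    √(1 - y' ^ 2) ^ 2 * sin_sq_add_cos_sq (2 * π * θ') +
    2 * √(1 - y ^ 2) * √(1 - y' ^ 2) * hdouble

lemma sq_sqrt_sub_sqrt_le {a b : ℝ} (ha : 0 ≤ a) (hb : 0 ≤ b) : (√a - √b) ^ 2 ≤ |a - b| := by
  have hdiff : |a - b| = |√a - √b| * (√a + √b) := by
    rw [← abs_of_nonneg (add_nonneg (sqrt_nonneg a) (sqrt_nonneg b)), ← abs_mul]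
    congr 1
    linear_combination -sq_sqrt ha + sq_sqrt hb
  rw [hdiff, ← sq_abs, sq]
  gcongr
  exact abs_le.2 ⟨by linarith [sqrt_nonneg a], by linarith [sqrt_nonneg b]⟩

lemma sqrt_one_sub_sq_le_one : √(1 - y ^ 2) ≤ 1 :=
  sqrt_le_one.2 (by linarith [sq_nonneg y])

lemma dist_piS_sq_le (hy : y ∈ Icc (-1) 1) (hy' : y' ∈ Icc (-1) 1) :
    dist (piS θ y) (piS θ' y') ^ 2 ≤ 4 * |y - y'| + (2 * π * (θ - θ')) ^ 2 := by
  have hsum : |y + y'| ≤ 2 := abs_le.2 ⟨by linarith [hy.1, hy'.1], by linarith [hy.2, hy'.2]⟩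
  have hdiff : |y - y'| ≤ 2 := abs_le.2 ⟨by linarith [hy.1, hy'.2], by linarith [hy.2, hy'.1]⟩
  have hradius : (√(1 - y ^ 2) - √(1 - y' ^ 2)) ^ 2 ≤ 2 * |y - y'| := calc
    _ ≤ |1 - y ^ 2 - (1 - y' ^ 2)| :=
        sq_sqrt_sub_sqrt_le (by nlinarith [hy.1, hy.2]) (by nlinarith [hy'.1, hy'.2])
    _ = |y + y'| * |y - y'| := by
        rw [← abs_mul, ← abs_neg]
        congr 1
        ring
    _ ≤ 2 * |y - y'| := by gcongr
  have hheight : (y - y') ^ 2 ≤ 2 * |y - y'| := by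
    rw [← sq_abs, sq]
    gcongr
  have hangle : 4 * √(1 - y ^ 2) * √(1 - y' ^ 2) * sin (π * (θ - θ')) ^ 2 ≤
      (2 * π * (θ - θ')) ^ 2 := calc
    _ ≤ 4 * 1 * 1 * (π * (θ - θ')) ^ 2 := by
        gcongr ?_ * ?_ * ?_ * ?_
        · exact sqrt_one_sub_sq_le_one
        · exact sqrt_one_sub_sq_le_one
        · exact sq_le_sq.2 abs_sin_le_abs
    _ = (2 * π * (θ - θ')) ^ 2 := by ring
  rw [dist_piS_sq]
  linarith

lemma exists_int_le_dist_piS {ρ : ℝ} (hy : |y| ≤ ρ) (hy' : |y'| ≤ ρ) :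
    ∃ n : ℤ, 4 * √(1 - ρ ^ 2) * |θ - θ' - n| ≤ dist (piS θ y) (piS θ' y') := by
  let n := round (θ - θ')
  have hsin : 2 * |θ - θ' - n| ≤ |sin (π * (θ - θ'))| := calc
    _ = 2 / π * |π * (θ - θ' - n)| := by
        rw [abs_mul, abs_of_pos pi_pos]
        field_simp
    _ ≤ |sin (π * (θ - θ' - n))| := mul_abs_le_abs_sin <| by
        rw [abs_mul, abs_of_pos pi_pos]
        nlinarith [pi_pos, abs_sub_round (θ - θ')]
    _ = |sin (π * (θ - θ'))| := by
        rw [mul_sub, mul_comm π (n : ℝ), sin_sub_int_mul_pi, abs_mul, abs_neg_one_zpow, one_mul]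
  have hsqrt {z : ℝ} (hz : |z| ≤ ρ) : √(1 - ρ ^ 2) ≤ √(1 - z ^ 2) :=
    sqrt_le_sqrt (by linarith [sq_le_sq.2 (hz.trans (le_abs_self ρ))])
  refine ⟨n, le_of_sq_le_sq ?_ dist_nonneg⟩
  calc (4 * √(1 - ρ ^ 2) * |θ - θ' - n|) ^ 2
      = 4 * √(1 - ρ ^ 2) * √(1 - ρ ^ 2) * (2 * |θ - θ' - n|) ^ 2 := by ring
    _ ≤ 4 * √(1 - y ^ 2) * √(1 - y' ^ 2) * |sin (π * (θ - θ'))| ^ 2 := by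
        gcongr ?_ * ?_ * ?_ * ?_
        · exact hsqrt hy
        · exact hsqrt hy'
        · gcongr
    _ ≤ dist (piS θ y) (piS θ' y') ^ 2 := by
        rw [dist_piS_sq, sq_abs]
        linarith [sq_nonneg (√(1 - y ^ 2) - √(1 - y' ^ 2)), sq_nonneg (y - y')]

lemma rotZ_piS (α θ y : ℝ) : rotZ α (piS θ y) = piS (θ + α) y := by
  have hangle : 2 * π * (θ + α) = 2 * π * θ + 2 * π * α := by ring
  ext i
  fin_cases i
  · change cos (2 * π * α) * (√(1 - y ^ 2) * cos (2 * π * θ)) -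
      sin (2 * π * α) * (√(1 - y ^ 2) * sin (2 * π * θ)) = √(1 - y ^ 2) * cos (2 * π * (θ + α))
    rw [hangle, cos_add]
    ring
  · change sin (2 * π * α) * (√(1 - y ^ 2) * cos (2 * π * θ)) +
      cos (2 * π * α) * (√(1 - y ^ 2) * sin (2 * π * θ)) = √(1 - y ^ 2) * sin (2 * π * (θ + α))
    rw [hangle, sin_add]
    ring
  · rfl

lemma rotZ_neg_rotZ (α : ℝ) (x : S²) : rotZ (-α) (rotZ α x) = x := by
  obtain ⟨θ, -, hx⟩ := exists_cylindrical_eq x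
  rw [← hx, coe_cylindrical (height_mem_Icc x), rotZ_piS, rotZ_piS, add_neg_cancel_right]

end SphereMetric

lemma rotZ_tile {q k L : ℕ} {ρ : ℝ} (hq : 0 < q) (hk : 0 < k) (hρ : ρ ∈ Ioo 0 1) (j n : ℤ)
    (s : Fin L) {p : ℝ × ℝ} (hp : p ∈ openRect 0 1) :
    rotZ (n / q) (tile (q * k) ρ j s p) = tile (q * k) ρ (j + n * k) s p := by
  have : (0 : ℝ) < q := by exact_mod_cast hq
  have : (0 : ℝ) < k := by exact_mod_cast hk
  rw [coe_tile hρ j s hp, coe_tile hρ _ s hp, rotZ_piS]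
  congr 1
  push_cast
  field_simp
  ring

namespace ActsOnTiles

variable {P L : ℕ} {ρ : ℝ} {G : ℝ × ℝ → ℝ × ℝ} {g : S² → S²}

lemma dist_apply_self_le (hg : ActsOnTiles P L ρ G g) (hρ : ρ ∈ Ioo 0 1) (x : S²) :
    dist (g x) x ≤ √(8 / L + (2 * π / P) ^ 2) := by
  by_cases hx : ∃ (j : ℤ) (s : Fin L), x ∈ tile P ρ j s '' openRect 0 1
  · obtain ⟨j, s, p, hp, rfl⟩ := hx
    have hGp := hg.mapsTo hp
    have hdiff {t t' : ℝ} (ht : t ∈ Ioo 0 1) (ht' : t' ∈ Ioo 0 1) : |t - t'| ≤ 1 :=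
      abs_le.2 ⟨by linarith [ht.1, ht'.2], by linarith [ht.2, ht'.1]⟩
    have hheight {t : ℝ} (ht : t ∈ Ioo 0 1) : bandHeight ρ s t ∈ Icc (-1) 1 :=
      abs_le.1 ((abs_bandHeight_lt hρ.1 s ht).trans hρ.2).le
    rw [hg.apply_tile j s p hp, Subtype.dist_eq, coe_tile hρ j s hGp, coe_tile hρ j s hp]
    refine le_sqrt_of_sq_le ((dist_piS_sq_le (hheight hGp.2) (hheight hp.2)).trans ?_)
    have hθ : |(j + (G p).1) / P - (j + p.1) / P| ≤ 1 / P := by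
      rw [← sub_div, add_sub_add_left_eq_sub, abs_div,
        abs_of_nonneg (P.cast_nonneg : (0 : ℝ) ≤ P)]
      gcongr
      exact hdiff hGp.1 hp.1
    have hy : |bandHeight ρ s (G p).2 - bandHeight ρ s p.2| ≤ 2 / L := by
      rw [bandHeight_sub, abs_mul, abs_of_nonneg (by have := hρ.1; positivity)]
      calc (2 * ρ / L * |(G p).2 - p.2| : ℝ) ≤ 2 * 1 / L * 1 := by
            gcongr
            exacts [hρ.2.le, hdiff hGp.2 hp.2]
        _ = 2 / L := by ring
    rw [← sq_abs, abs_mul, abs_of_pos two_pi_pos]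
    calc _ ≤ 4 * (2 / L) + (2 * π * (1 / P)) ^ 2 := by gcongr
      _ = _ := by ring
  · push Not at hx
    rw [hg.apply_of_forall_notMem x hx, dist_self]
    positivity

lemma apply_of_le_abs_height (hg : ActsOnTiles P L ρ G g) (hρ : ρ ∈ Ioo 0 1) {x : S²}
    (hx : ρ ≤ |(x : E³) 2|) : g x = x := by
  refine hg.apply_of_forall_notMem x ?_
  rintro j s ⟨p, hp, rfl⟩
  rw [coe_tile hρ j s hp, piS_two] at hx
  exact hx.not_gt (abs_bandHeight_lt hρ.1 s hp.2)

lemma coe_apply_eq_rotZ {q k : ℕ} (hq : 0 < q) (hk : 0 < k) (hg : ActsOnTiles (q * k) L ρ G g)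
    (hρ : ρ ∈ Ioo 0 1) {x y : S²} (hxy : (y : E³) = rotZ (1 / q) x) :
    (g y : E³) = rotZ (1 / q) (g x) := by
  have hrot (j : ℤ) (s : Fin L) {p : ℝ × ℝ} (hp : p ∈ openRect 0 1) :=
    rotZ_tile hq hk hρ j 1 s hp
  simp only [Int.cast_one, one_mul] at hrot
  by_cases hx : ∃ (j : ℤ) (s : Fin L), x ∈ tile (q * k) ρ j s '' openRect 0 1
  · obtain ⟨j, s, p, hp, rfl⟩ := hx
    rw [hrot j s hp] at hxy
    rw [Subtype.ext hxy, hg.apply_tile _ s p hp, hg.apply_tile j s p hp, hrot j s (hg.mapsTo hp)]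
  · push Not at hx
    rw [hg.apply_of_forall_notMem x hx, ← hxy, hg.apply_of_forall_notMem y]
    rintro j s ⟨p, hp, rfl⟩
    refine hx (j + (-1) * k) s ⟨p, hp, Subtype.ext ?_⟩
    rw [← rotZ_tile hq hk hρ j (-1) s hp, hxy, Int.cast_neg, Int.cast_one, neg_div,
      rotZ_neg_rotZ]

end ActsOnTiles

section Averaging

variable {n : ℕ}

lemma natCast_mul_volume_inter_Ioo [NeZero n] (A : Set ℝ) :
    n * volume (A ∩ Ioo 0 1) = ∑ k : Fin n, volume {t ∈ Ioo (0 : ℝ) 1 | (k + t) / n ∈ A} := by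
  have hn : (0 : ℝ) < n := Nat.cast_pos.2 (NeZero.pos n)
  have hfull : Ioo (0 : ℝ) 1 =ᵐ[volume] ⋃ k : Fin n, gridInterval k :=
    (ae_le_set.2 volume_Ioo_sdiff_iUnion_gridInterval).antisymm
      (iUnion_subset gridInterval_subset_Ioo_zero_one).eventuallyLE
  have hcell (k : Fin n) : volume {t ∈ Ioo (0 : ℝ) 1 | (k + t) / n ∈ A} =
      n * volume.restrict (gridInterval k) A := by
    have hpreimage : {t ∈ Ioo (0 : ℝ) 1 | (k + t) / n ∈ A} =
        ((k : ℝ) + ·) ⁻¹' ((· * (n : ℝ)⁻¹) ⁻¹' (A ∩ gridInterval k)) := by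
      ext t
      simp only [mem_preimage, mem_inter_iff, mem_gridInterval_iff, ← div_eq_mul_inv,
        mul_div_cancel₀ _ hn.ne', mem_ofPred_eq, mem_Ioo, lt_add_iff_pos_right,
        add_lt_add_iff_left, and_comm]
    rw [hpreimage, measure_preimage_add, Real.volume_preimage_mul_right (by positivity), inv_inv,
      abs_of_pos hn, ENNReal.ofReal_natCast, Measure.restrict_apply' (measurableSet_gridInterval k)]
  rw [measure_congr ((ae_eq_refl A).inter hfull),
    ← Measure.restrict_apply' (.iUnion measurableSet_gridInterval),
    Measure.restrict_iUnion pairwise_disjoint_gridInterval measurableSet_gridInterval,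
    Measure.sum_fintype, Measure.finsetSum_apply, Finset.mul_sum]
  exact Finset.sum_congr rfl fun k _ => (hcell k).symm

lemma volume_preimage_fract_mul [NeZero n] (A : Set ℝ) :
    volume ((fun θ => Int.fract ((n : ℝ) * θ)) ⁻¹' A ∩ Ioo 0 1) = volume (A ∩ Ioo 0 1) := by
  have hn : (n : ℝ) ≠ 0 := Nat.cast_ne_zero.2 (NeZero.ne n)
  have hcell (k : Fin n) :
      {t ∈ Ioo (0 : ℝ) 1 | (k + t) / n ∈ (fun θ => Int.fract ((n : ℝ) * θ)) ⁻¹' A} =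
        A ∩ Ioo 0 1 := by
    ext t
    rw [mem_ofPred_eq, mem_preimage, mul_div_cancel₀ _ hn, Int.fract_natCast_add, and_comm,
      mem_inter_iff, and_congr_left_iff]
    exact fun ht => by rw [Int.fract_eq_self.2 ⟨ht.1.le, ht.2⟩]
  have hsum := natCast_mul_volume_inter_Ioo (n := n) ((fun θ => Int.fract ((n : ℝ) * θ)) ⁻¹' A)
  simp only [hcell, Finset.sum_const, Finset.card_univ, Fintype.card_fin, nsmul_eq_mul] at hsum
  exact (ENNReal.mul_right_inj (Nat.cast_ne_zero.2 (NeZero.ne n)) (by simp)).1 hsum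

lemma volume_le_of_forall_bandHeight [NeZero n] {ρ : ℝ} (hρ : 0 < ρ) {C : Set ℝ}
    (hC : ∀ y ∈ C, |y| < ρ) {m : ℝ≥0∞}
    (hm : ∀ s : Fin n, volume {t ∈ Ioo (0 : ℝ) 1 | bandHeight ρ s t ∈ C} ≤ m) :
    volume C ≤ ENNReal.ofReal (2 * ρ) * m := by
  let A : Set ℝ := (fun x => ρ * (2 * x - 1)) ⁻¹' C
  have hA : A ⊆ Ioo 0 1 := fun x hx => by
    have h := hC _ hx
    rw [abs_mul, abs_of_pos hρ, mul_lt_iff_lt_one_right hρ, abs_lt] at h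
    exact ⟨by linarith [h.1], by linarith [h.2]⟩
  have hCA : volume C = ENNReal.ofReal (2 * ρ) * volume A := by
    have hpreimage : A = ((2 * ρ) * ·) ⁻¹' ((-ρ + ·) ⁻¹' C) := by
      ext x
      simp only [A, mem_preimage]
      ring_nf
    rw [hpreimage, Real.volume_preimage_mul_left (by positivity), measure_preimage_add,
      abs_of_pos (by positivity), ← mul_assoc, ← ENNReal.ofReal_mul (by positivity),
      mul_inv_cancel₀ (by positivity), ENNReal.ofReal_one, one_mul]
  rw [hCA]
  gcongr
  refine (ENNReal.mul_le_mul_iff_right (Nat.cast_ne_zero.2 (NeZero.ne n)) (by simp)).1 ?_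
  calc n * volume A = ∑ s : Fin n, volume {t ∈ Ioo (0 : ℝ) 1 | bandHeight ρ s t ∈ C} := by
        rw [← inter_eq_left.2 hA]
        exact natCast_mul_volume_inter_Ioo A
    _ ≤ n * m := (Finset.sum_le_sum fun s _ => hm s).trans_eq (by simp)

end Averaging

section Kantorovich

lemma exists_lipschitzWith_le_integral_sub {M : Type*} [PseudoMetricSpace M] [MeasurableSpace M]
    [OpensMeasurableSpace M] {μ ν : Measure M} [IsFiniteMeasure μ] [IsFiniteMeasure ν] {r : ℝ}
    (hr : 0 < r) (B : Set M) :
    ∃ f : M → ℝ, LipschitzWith 1 f ∧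
      r * (ν.real (closure B) - μ.real (thickening r B)) ≤ ∫ x, f x ∂ν - ∫ x, f x ∂μ := by
  let φ (x : M) : ℝ := thickenedIndicator hr B x
  have hφ (κ : Measure M) [IsFiniteMeasure κ] : Integrable φ κ :=
    (thickenedIndicator hr B).integrable_of_nnreal κ
  have hlip : LipschitzWith 1 fun x => r * φ x := by
    have h := (lipschitzWith_smul r).comp
      (NNReal.isometry_coe.lipschitz.comp (lipschitzWith_thickenedIndicator hr B))
    rwa [one_mul, ← toNNReal_eq_nnnorm_of_nonneg hr.le,
      mul_inv_cancel₀ (toNNReal_pos.2 hr).ne'] at h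
  have hν : ν.real (closure B) ≤ ∫ x, φ x ∂ν := by
    rw [← integral_indicator_one isClosed_closure.measurableSet]
    refine integral_mono ((integrable_const 1).indicator isClosed_closure.measurableSet) (hφ ν)
      (indicator_le' (fun x hx => ?_) fun _ _ => ?_)
    · exact_mod_cast (thickenedIndicator_one_of_mem_closure hr B hx).ge
    · exact NNReal.coe_nonneg _
  have hμ : ∫ x, φ x ∂μ ≤ μ.real (thickening r B) := by
    rw [← integral_indicator_one isOpen_thickening.measurableSet]
    refine integral_mono (hφ μ) ((integrable_const 1).indicator isOpen_thickening.measurableSet)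
      (le_indicator (fun x _ => ?_) fun x hx => ?_)
    · exact_mod_cast thickenedIndicator_le_one hr B x
    · exact_mod_cast (thickenedIndicator_zero hr B hx).le
  refine ⟨_, hlip, ?_⟩
  rw [integral_const_mul, integral_const_mul, ← mul_sub]
  gcongr

lemma exists_lipschitzWith_le_integral_map_sub {Ω M : Type*} [MeasurableSpace Ω]
    [PseudoMetricSpace M] [MeasurableSpace M] [OpensMeasurableSpace M] {μ : Measure Ω}
    [IsFiniteMeasure μ] {γ γ' : Ω → M} (hγ : Measurable γ) (hγ' : Measurable γ') {r : ℝ}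
    (hr : 0 < r) {A A' : Set Ω} (h : ∀ a ∈ A, ∀ a' ∈ A', r ≤ dist (γ a) (γ' a')) :
    ∃ f : M → ℝ, LipschitzWith 1 f ∧
      r * (μ.real A' - μ.real Aᶜ) ≤ ∫ x, f x ∂(μ.map γ') - ∫ x, f x ∂(μ.map γ) := by
  obtain ⟨f, hf, hint⟩ :=
    exists_lipschitzWith_le_integral_sub (μ := μ.map γ) (ν := μ.map γ') hr (γ' '' A')
  refine ⟨f, hf, le_trans ?_ hint⟩
  rw [map_measureReal_apply hγ' isClosed_closure.measurableSet,
    map_measureReal_apply hγ isOpen_thickening.measurableSet]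
  refine mul_le_mul_of_nonneg_left (sub_le_sub (measureReal_mono ?_) (measureReal_mono ?_)) hr.le
  · exact fun a' ha' => subset_closure (mem_image_of_mem γ' ha')
  · intro a ha haA
    obtain ⟨_, ⟨a', ha', rfl⟩, hlt⟩ := mem_thickening_iff.1 ha
    exact hlt.not_ge (h a haA a' ha')

end Kantorovich

section LatitudeMeasure

variable {g : S² → S²} {y : ℝ}

lemma map_latitudeMeasure (hg : Continuous g) (hy : y ∈ Icc (-1) 1) :
    (latitudeMeasure y).map g =
      (volume.restrict (Ioo 0 1)).map fun θ => g (cylindrical (θ, y)) := by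
  have hcyl : Measurable fun θ => cylindrical (θ, y) :=
    (continuous_cylindrical.comp (by fun_prop)).measurable
  have hval : MeasurableEmbedding (Subtype.val : S² → E³) :=
    .subtype_coe isClosed_sphere.measurableSet
  have hpiS : (fun θ => piS θ y) = Subtype.val ∘ fun θ => cylindrical (θ, y) :=
    funext fun θ => (coe_cylindrical (p := (θ, y)) hy).symm
  rw [latitudeMeasure, hpiS, ← Measure.map_map hval.measurable hcyl, hval.comap_map,
    Measure.map_map hg.measurable hcyl, restrict_Ioo_eq_restrict_Icc]
  rfl

lemma lipschitzWith_height : LipschitzWith 1 fun x : S² => (x : E³) 2 :=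
  LipschitzWith.of_dist_le_mul fun x y => by
    simpa [Subtype.dist_eq] using PiLp.dist_apply_le (x : E³) y 2

lemma abs_integral_height_sub_le (hg : Continuous g) {D : ℝ} (hD : ∀ x, dist (g x) x ≤ D)
    (hy : y ∈ Icc (-1) 1) : |∫ x, (x : E³) 2 ∂((latitudeMeasure y).map g) - y| ≤ D := by
  have hcyl : Continuous fun θ => g (cylindrical (θ, y)) :=
    hg.comp (continuous_cylindrical.comp (by fun_prop))
  have hheight : Continuous fun θ => (g (cylindrical (θ, y)) : E³) 2 :=
    lipschitzWith_height.continuous.comp hcyl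
  have hbound (θ : ℝ) : ‖(g (cylindrical (θ, y)) : E³) 2 - y‖ ≤ D := by
    have h := (lipschitzWith_height.dist_le_mul (g (cylindrical (θ, y))) (cylindrical (θ, y))).trans
      (by simpa using hD (cylindrical (θ, y)))
    rwa [coe_cylindrical (p := (θ, y)) hy, piS_two] at h
  have hsub : ∫ x, (x : E³) 2 ∂((latitudeMeasure y).map g) - y =
      ∫ θ in Ioo 0 1, ((g (cylindrical (θ, y)) : E³) 2 - y) := by
    rw [map_latitudeMeasure hg hy, integral_map hcyl.aemeasurable
      lipschitzWith_height.continuous.aestronglyMeasurable, integral_sub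
      (hheight.integrableOn_Icc.mono_set Ioo_subset_Icc_self) (integrableOn_const (by simp))]
    simp
  rw [hsub]
  simpa using norm_setIntegral_le_of_norm_le_const (μ := volume) (s := Ioo (0 : ℝ) 1) (by simp)
    fun θ _ => hbound θ

/-- The heights `y'` for which the Kantorovich distance from `g_* μ_y` to `g_* μ_{y'}` is at
most `c`. -/
def closeHeights (g : S² → S²) (c y : ℝ) : Set ℝ :=
  {y' ∈ Icc (-1 : ℝ) 1 | ∀ f : S² → ℝ, LipschitzWith 1 f →
    ∫ x, f x ∂((latitudeMeasure y).map g) - ∫ x, f x ∂((latitudeMeasure y').map g) ≤ c}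

lemma abs_integral_sub_le_of_mem_closeHeights {c y' : ℝ} (hy' : y' ∈ closeHeights g c y)
    {f : S² → ℝ} (hf : LipschitzWith 1 f) :
    |∫ x, f x ∂((latitudeMeasure y).map g) - ∫ x, f x ∂((latitudeMeasure y').map g)| ≤ c := by
  have hneg := hy'.2 _ hf.neg
  simp only [Pi.neg_apply, integral_neg] at hneg
  exact abs_le.2 ⟨by linarith, hy'.2 f hf⟩

lemma abs_sub_le_of_mem_closeHeights (hg : Continuous g) {D : ℝ} (hD : ∀ x, dist (g x) x ≤ D)
    (hy : y ∈ Icc (-1) 1) {c y' : ℝ} (hy' : y' ∈ closeHeights g c y) : |y' - y| ≤ 2 * D + c := by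
  have hheight := abs_le.1 (abs_integral_height_sub_le hg hD hy)
  have hheight' := abs_le.1 (abs_integral_height_sub_le hg hD hy'.1)
  have hclose := abs_le.1 (abs_integral_sub_le_of_mem_closeHeights hy' lipschitzWith_height)
  exact abs_le.2 ⟨by linarith [hclose.2, hheight.1, hheight'.2],
    by linarith [hclose.1, hheight.2, hheight'.1]⟩

end LatitudeMeasure

section Separation

variable {P L : ℕ} {ρ r : ℝ} {δ : ℝ × ℝ}

lemma le_dist_tile (hP : 0 < P) (hρ : ρ ∈ Ioo 0 1) (hr₁ : r ≤ 4 * √(1 - ρ ^ 2) * (δ.1 / P))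
    (hr₂ : r ≤ 2 * ρ / L * δ.2) (j j' : ℤ) (s : Fin L) {p p' : ℝ × ℝ} (hp : p ∈ openRect 0 1)
    (hp' : p' ∈ openRect 0 1) (h : ∀ N : ℤ, |p.2 - p'.2| < δ.2 → δ.1 ≤ |p.1 - p'.1 - N|) :
    r ≤ dist (tile P ρ j s p) (tile P ρ j' s p') := by
  have hP' : (0 : ℝ) < P := by exact_mod_cast hP
  have hL : (0 : ℝ) < L := by exact_mod_cast s.pos
  have hρ₀ := hρ.1
  rw [Subtype.dist_eq, coe_tile hρ j s hp, coe_tile hρ j' s hp']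
  rcases lt_or_ge |p.2 - p'.2| δ.2 with hnear | hfar
  · obtain ⟨n, hn⟩ := exists_int_le_dist_piS (θ := (j + p.1) / P) (θ' := (j' + p'.1) / P)
      (abs_bandHeight_lt hρ₀ s hp.2).le (abs_bandHeight_lt hρ₀ s hp'.2).le
    have hangle : (j + p.1) / P - (j' + p'.1) / P - n =
        (p.1 - p'.1 - ((j' - j + P * n : ℤ) : ℝ)) / P := by
      push_cast
      field_simp
      ring
    rw [hangle, abs_div, abs_of_pos hP'] at hn
    refine hr₁.trans (le_trans ?_ hn)
    gcongr
    exact h _ hnear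
  · calc r ≤ 2 * ρ / L * δ.2 := hr₂
      _ ≤ 2 * ρ / L * |p.2 - p'.2| := by gcongr
      _ = |bandHeight ρ s p.2 - bandHeight ρ s p'.2| := by
        rw [bandHeight_sub, abs_mul, abs_of_pos (by positivity : 0 < 2 * ρ / L)]
      _ ≤ _ := PiLp.dist_apply_le (piS _ _) (piS _ _) 2

namespace ActsOnTiles

variable {G : ℝ × ℝ → ℝ × ℝ} {g : S² → S²}

lemma apply_cylindrical_bandHeight (hg : ActsOnTiles P L ρ G g) (hP : 0 < P) (s : Fin L) {θ u : ℝ}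
    (hθ : Int.fract (P * θ) ∈ Ioo 0 1) (hu : u ∈ Ioo 0 1) :
    g (cylindrical (θ, bandHeight ρ s u)) =
      tile P ρ ⌊P * θ⌋ s (G (Int.fract (P * θ), u)) := by
  have hP' : (P : ℝ) ≠ 0 := by exact_mod_cast hP.ne'
  rw [← hg.apply_tile _ _ _ ⟨hθ, hu⟩, tile, Int.floor_add_fract, mul_div_cancel_left₀ _ hP']

lemma exists_lipschitzWith_le_integral_sub (hg : ActsOnTiles P L ρ G g) (hcont : Continuous g)
    (hP : 0 < P) (hρ : ρ ∈ Ioo 0 1) (hr : 0 < r) (hr₁ : r ≤ 4 * √(1 - ρ ^ 2) * (δ.1 / P))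
    (hr₂ : r ≤ 2 * ρ / L * δ.2) (s : Fin L) {u u' : ℝ} (hu : u ∈ Ioo 0 1) (hu' : u' ∈ Ioo 0 1)
    (hsep : SeparatesRows G δ u u') :
    ∃ f : S² → ℝ, LipschitzWith 1 f ∧
      r / 256 ≤ ∫ x, f x ∂((latitudeMeasure (bandHeight ρ s u')).map g) -
        ∫ x, f x ∂((latitudeMeasure (bandHeight ρ s u)).map g) := by
  obtain ⟨X, hX, X', hX', hvolX, hvolX', hfar⟩ := hsep
  have : NeZero P := ⟨hP.ne'⟩
  let lap (θ : ℝ) : ℝ := Int.fract (P * θ)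
  have hvol (A : Set ℝ) : (volume.restrict (Ioo 0 1)) (lap ⁻¹' A) = volume (Ioo 0 1 ∩ A) := by
    rw [Measure.restrict_apply' measurableSet_Ioo, volume_preimage_fract_mul, inter_comm]
  have hheight {t : ℝ} (ht : t ∈ Ioo 0 1) : bandHeight ρ s t ∈ Icc (-1) 1 :=
    abs_le.1 ((abs_bandHeight_lt hρ.1 s ht).trans hρ.2).le
  have hmeas (t : ℝ) : Measurable fun θ => g (cylindrical (θ, bandHeight ρ s t)) :=
    (hcont.comp (continuous_cylindrical.comp (by fun_prop))).measurable
  have hdist : ∀ θ ∈ lap ⁻¹' X, ∀ θ' ∈ lap ⁻¹' X',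
      r ≤ dist (g (cylindrical (θ, bandHeight ρ s u)))
        (g (cylindrical (θ', bandHeight ρ s u'))) := fun θ hθ θ' hθ' => by
    rw [hg.apply_cylindrical_bandHeight hP s (hX hθ) hu,
      hg.apply_cylindrical_bandHeight hP s (hX' hθ') hu']
    exact le_dist_tile hP hρ hr₁ hr₂ _ _ s (hg.mapsTo ⟨hX hθ, hu⟩)
      (hg.mapsTo ⟨hX' hθ', hu'⟩) (hfar _ hθ _ hθ')
  have hX_compl : (volume.restrict (Ioo 0 1)).real (lap ⁻¹' X)ᶜ ≤ 1 / 256 :=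
    ENNReal.toReal_le_of_le_ofReal (by norm_num) ((hvol Xᶜ).trans_le hvolX)
  have hX'_vol : 1 / 128 ≤ (volume.restrict (Ioo 0 1)).real (lap ⁻¹' X') :=
    (ENNReal.ofReal_le_iff_le_toReal (measure_ne_top _ _)).1
      (hvolX'.trans_eq (by rw [hvol, inter_eq_right.2 hX']))
  obtain ⟨f, hf, hint⟩ := exists_lipschitzWith_le_integral_map_sub
    (μ := volume.restrict (Ioo 0 1)) (hmeas u) (hmeas u') hr hdist
  rw [map_latitudeMeasure hcont (hheight hu), map_latitudeMeasure hcont (hheight hu')]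
  exact ⟨f, hf, by nlinarith⟩

end ActsOnTiles

end Separation

namespace ActsOnTiles

variable {P L : ℕ} {ρ r : ℝ} {δ : ℝ × ℝ} {G : ℝ × ℝ → ℝ × ℝ} {g : S² → S²}

lemma not_separatesRows_of_mem_closeHeights (hg : ActsOnTiles P L ρ G g) (hcont : Continuous g)
    (hP : 0 < P) (hρ : ρ ∈ Ioo 0 1) (hr : 0 < r) (hr₁ : r ≤ 4 * √(1 - ρ ^ 2) * (δ.1 / P))
    (hr₂ : r ≤ 2 * ρ / L * δ.2) {c y : ℝ} (hc : 2 * c < r / 256) (s : Fin L) {u u' : ℝ}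
    (hu : u ∈ Ioo 0 1) (hu' : u' ∈ Ioo 0 1) (hy : bandHeight ρ s u ∈ closeHeights g c y)
    (hy' : bandHeight ρ s u' ∈ closeHeights g c y) : ¬ SeparatesRows G δ u u' := by
  intro hsep
  obtain ⟨f, hf, hint⟩ :=
    hg.exists_lipschitzWith_le_integral_sub hcont hP hρ hr hr₁ hr₂ s hu hu' hsep
  have h := abs_le.1 (abs_integral_sub_le_of_mem_closeHeights hy hf)
  have h' := abs_le.1 (abs_integral_sub_le_of_mem_closeHeights hy' hf)
  linarith [h.2, h'.1]

lemma volume_band_closeHeights_le (hg : ActsOnTiles P L ρ G g) (hcont : Continuous g)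
    (hP : 0 < P) (hρ : ρ ∈ Ioo 0 1) (hr : 0 < r) (hr₁ : r ≤ 4 * √(1 - ρ ^ 2) * (δ.1 / P))
    (hr₂ : r ≤ 2 * ρ / L * δ.2) {c y : ℝ} (hc : 2 * c < r / 256) {Y : Set ℝ} (hY : Y ⊆ Ioo 0 1)
    {κ : ℝ≥0∞} (hκ : volume (Ioo 0 1 \ Y) ≤ κ)
    (hsep : ∀ u ∈ Y, volume {u' ∈ Y | ¬ SeparatesRows G δ u u'} ≤ κ) (s : Fin L) :
    volume {t ∈ Ioo 0 1 | bandHeight ρ s t ∈ closeHeights g c y} ≤ 2 * κ := by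
  let Z : Set ℝ := {t ∈ Y | bandHeight ρ s t ∈ closeHeights g c y}
  have hZ : volume Z ≤ κ := by
    rcases Z.eq_empty_or_nonempty with hempty | ⟨u, hu⟩
    · simp [hempty]
    · refine (measure_mono fun u' hu' => ?_).trans (hsep u hu.1)
      exact ⟨hu'.1, hg.not_separatesRows_of_mem_closeHeights hcont hP hρ hr hr₁ hr₂ hc s
        (hY hu.1) (hY hu'.1) hu.2 hu'.2⟩
  calc volume {t ∈ Ioo 0 1 | bandHeight ρ s t ∈ closeHeights g c y}
      ≤ volume (Ioo 0 1 \ Y ∪ Z) := measure_mono fun t ht =>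
        (em (t ∈ Y)).symm.imp (fun htY => ⟨ht.1, htY⟩) fun htY => ⟨htY, ht.2⟩
    _ ≤ κ + κ := (measure_union_le _ _).trans (add_le_add hκ hZ)
    _ = 2 * κ := (two_mul κ).symm

end ActsOnTiles

theorem exists_actsOnTiles_volume_closeHeights_le {P L : ℕ} {ρ : ℝ} (hP : 0 < P) (hL : 0 < L)
    (hρ : ρ ∈ Ioo 0 1) :
    ∃ C : ℝ, 0 < C ∧ ∀ v : ℕ, 0 < v → ∃ (G : ℝ × ℝ → ℝ × ℝ) (g : S² ≃ₜ S²),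
      IsMeasureDiffeoOn (𝓡 2) sphereMeasure univ g ∧ ActsOnTiles P L ρ G g ∧
      ∀ y, (∀ y' ∈ closeHeights g (3 * (C / v)) y, |y'| < ρ) →
        (1 / 2 : ℝ≥0∞) * volume (closeHeights g (3 * (C / v)) y) ≤
          ENNReal.ofReal (2 * (3 / 4) ^ v ^ 2) := by
  have hρ₀ := hρ.1
  have hsqrt : 0 < √(1 - ρ ^ 2) := sqrt_pos.2 (by nlinarith [hρ.2])
  let R : ℝ := min (√(1 - ρ ^ 2) / (8 * P)) (ρ / (32 * L))
  have : 0 < R := lt_min (by positivity) (by positivity)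
  refine ⟨R / 2000, by positivity, fun v hv => ?_⟩
  have : NeZero L := ⟨hL.ne'⟩
  let κ : ℝ≥0∞ := ENNReal.ofReal ((3 / 4) ^ v ^ 2)
  obtain ⟨G, hG, Y, hY, hvolY, hsep⟩ := exists_isMeasureDiffeoOn_separatesRows hv
    (ENNReal.ofReal_pos.2 (by positivity) : 0 < κ).ne'
  obtain ⟨g, hg, hact⟩ := exists_isMeasureDiffeoOn_actsOnTiles (L := L) hG hP hρ
  refine ⟨G, g, hg, hact, fun y hy => ?_⟩
  have hband := hact.volume_band_closeHeights_le (r := R / v) (y := y) g.continuous hP hρ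
    (by positivity) ?_ ?_ (c := 3 * (R / 2000 / v)) ?_ hY hvolY hsep
  · calc (1 / 2 : ℝ≥0∞) * volume (closeHeights g (3 * (R / 2000 / v)) y)
        ≤ 1 / 2 * (ENNReal.ofReal 2 * (2 * κ)) := by
          gcongr
          refine (volume_le_of_forall_bandHeight hρ₀ hy hband).trans ?_
          gcongr
          linarith [hρ.2]
      _ = ENNReal.ofReal (2 * (3 / 4) ^ v ^ 2) := by
        rw [ENNReal.ofReal_ofNat, ← mul_assoc, one_div, ENNReal.inv_mul_cancel (by simp) (by simp),
          one_mul, ENNReal.ofReal_mul zero_le_two, ENNReal.ofReal_ofNat]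
  · calc R / v ≤ √(1 - ρ ^ 2) / (8 * P) / v := by gcongr; exact min_le_left _ _
      _ = 4 * √(1 - ρ ^ 2) * (1 / (32 * v) / P) := by field_simp; ring
  · calc R / v ≤ ρ / (32 * L) / v := by gcongr; exact min_le_right _ _
      _ = 2 * ρ / L * (1 / (64 * v)) := by field_simp; ring
  · have : 0 < R / v := by positivity
    linarith [div_right_comm R 2000 (v : ℝ)]

section Parameters

lemma exists_nat_sqrt_le {q : ℕ} (hq : 0 < q) {D : ℝ} (hD : 0 < D) :
    ∃ n : ℕ, 0 < n ∧ √(8 / n + (2 * π / (q * n : ℕ)) ^ 2) ≤ D := by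
  have htile : Tendsto (fun n : ℕ => 2 * π / (q * n : ℕ)) atTop (𝓝 0) :=
    (tendsto_const_div_atTop_nhds_zero_nat (2 * π)).comp (tendsto_id.const_mul_atTop' hq)
  have hdiam : Tendsto (fun n : ℕ => √(8 / n + (2 * π / (q * n : ℕ)) ^ 2)) atTop (𝓝 0) := by
    simpa using ((tendsto_const_div_atTop_nhds_zero_nat 8).add (htile.pow 2)).sqrt
  exact ((eventually_gt_atTop 0).and (hdiam.eventually_le_const hD)).exists

lemma eventually_two_mul_pow_sq_le_exp {C ε : ℝ} (hC : 0 < C) (hε : 0 < ε) :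
    ∀ᶠ v : ℕ in atTop, 2 * (3 / 4 : ℝ) ^ v ^ 2 ≤ exp (-(C / v) ^ (-2 + ε)) := by
  have hlim : Tendsto (fun v : ℕ => (v : ℝ) ^ ε) atTop atTop :=
    (tendsto_rpow_atTop hε).comp tendsto_natCast_atTop_atTop
  filter_upwards [eventually_ge_atTop 3, hlim.eventually_ge_atTop (8 * C ^ (-2 + ε))] with v hv hvε
  have hv₃ : (3 : ℝ) ≤ v := by exact_mod_cast hv
  have hv₀ : (0 : ℝ) < v := by linarith
  have hrate : (C / v) ^ (-2 + ε) ≤ v ^ 2 / 8 := by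
    rw [div_rpow hC.le hv₀.le, div_le_iff₀ (by positivity), rpow_add hv₀, rpow_neg hv₀.le, rpow_two]
    field_simp
    linarith
  have htwo : 2 ≤ exp ((v : ℝ) ^ 2 / 8) := by
    nlinarith [add_one_le_exp ((v : ℝ) ^ 2 / 8)]
  have hbase : (3 / 4 : ℝ) ≤ exp (-(1 / 4)) := by
    linarith [add_one_le_exp (-(1 / 4) : ℝ)]
  calc 2 * (3 / 4 : ℝ) ^ v ^ 2 ≤ exp (v ^ 2 / 8) * exp (-(1 / 4)) ^ v ^ 2 := by gcongr
    _ = exp (-(v ^ 2 / 8)) := by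
      rw [← exp_nat_mul, ← exp_add]
      push_cast
      ring_nf
    _ ≤ exp (-(C / v) ^ (-2 + ε)) := by gcongr

end Parameters

end SphereEmergence

open SphereEmergence

/-- **Corollary 4.2 (sphere case): the emergence lemma on the sphere.** There is `ε₀ > 0` such
that for every `ε ∈ (0, ε₀)`, `q ≥ 1` and `η₁ > 0`, there are `η ∈ (0, η₁)` and a `C^∞`
diffeomorphism `g` of `S²` preserving the normalized surface measure, equal to the identity
near the poles, commuting with `R_{1/q}`, `ε`-`C⁰`-close to the identity together with its
inverse, and such that for every `y ∈ [−1+ε, 1−ε]`, the normalized measure of the set of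
heights `y'` with `d_K(g_*μ_y, g_*μ_{y'}) ≤ 3η` is at most `exp(−η^{−2+ε})`. -/
theorem sphere_emergence_lemma :
    ∃ ε₀ > (0 : ℝ), ∀ ε : ℝ, 0 < ε → ε < ε₀ → ∀ q : ℕ, 1 ≤ q → ∀ η₁ : ℝ, 0 < η₁ →
      ∃ η : ℝ, 0 < η ∧ η < η₁ ∧
      ∃ g : sphere (0 : EuclideanSpace ℝ (Fin 3)) 1 ≃ₜ sphere (0 : EuclideanSpace ℝ (Fin 3)) 1,
        ContMDiff (𝓡 2) (𝓡 2) (⊤ : ℕ∞) ⇑g ∧ ContMDiff (𝓡 2) (𝓡 2) (⊤ : ℕ∞) ⇑g.symm ∧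
        MeasurePreserving g sphereMeasure sphereMeasure ∧
        (∃ δ > 0, ∀ x : sphere (0 : EuclideanSpace ℝ (Fin 3)) 1,
          1 - δ < |(x : EuclideanSpace ℝ (Fin 3)) 2| → g x = x) ∧
        (∀ x y : sphere (0 : EuclideanSpace ℝ (Fin 3)) 1,
          (y : EuclideanSpace ℝ (Fin 3)) = rotZ (1 / q) x →
          (g y : EuclideanSpace ℝ (Fin 3)) = rotZ (1 / q) (g x)) ∧
        (∀ x : sphere (0 : EuclideanSpace ℝ (Fin 3)) 1,
          dist (g x) x ≤ ε ∧ dist (g.symm x) x ≤ ε) ∧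
        ∀ y ∈ Set.Icc (-1 + ε) (1 - ε),
          (1 / 2 : ℝ≥0∞) * (volume : Measure ℝ) {y' ∈ Set.Icc (-1 : ℝ) 1 |
              ∀ f : sphere (0 : EuclideanSpace ℝ (Fin 3)) 1 → ℝ, LipschitzWith 1 f →
                (∫ x, f x ∂(Measure.map g (latitudeMeasure y))) -
                    (∫ x, f x ∂(Measure.map g (latitudeMeasure y'))) ≤ 3 * η} ≤
            ENNReal.ofReal (Real.exp (-η ^ (-2 + ε))) := by
  refine ⟨1, one_pos, fun ε hε hε₁ q hq η₁ hη₁ => ?_⟩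
  have hρ : 1 - ε / 2 ∈ Set.Ioo 0 1 := ⟨by linarith, by linarith⟩
  obtain ⟨n, hn, hdiam⟩ := exists_nat_sqrt_le hq (by positivity : 0 < ε / 8)
  obtain ⟨C, hC, hmap⟩ := exists_actsOnTiles_volume_closeHeights_le (Nat.mul_pos hq hn) hn hρ
  obtain ⟨v, hv, hCv, hexp⟩ := ((Filter.eventually_gt_atTop 0).and
    (((tendsto_const_div_atTop_nhds_zero_nat C).eventually_lt_const
      (lt_min hη₁ (by positivity : 0 < ε / 12))).and
        (eventually_two_mul_pow_sq_le_exp hC hε))).exists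
  obtain ⟨hCη₁, hCε⟩ := lt_min_iff.1 hCv
  obtain ⟨G, g, hg, hact, hvol⟩ := hmap v hv
  have hmove (x) : dist (g x) x ≤ ε / 8 := (hact.dist_apply_self_le hρ x).trans hdiam
  refine ⟨C / v, by positivity, hCη₁, g, hg.contMDiff, hg.contMDiff_symm, hg.measurePreserving,
    ⟨ε / 2, by positivity, fun x hx => hact.apply_of_le_abs_height hρ hx.le⟩,
    fun x y => hact.coe_apply_eq_rotZ hq hn hρ, fun x => ⟨by linarith [hmove x], ?_⟩,
    fun y hy => ?_⟩
  · simpa [dist_comm] using (hmove (g.symm x)).trans (by linarith)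
  · have hclose (y') (hy' : y' ∈ closeHeights g (3 * (C / v)) y) : |y'| < 1 - ε / 2 := by
      have h := abs_sub_le_of_mem_closeHeights g.continuous hmove ⟨by linarith [hy.1],
        by linarith [hy.2]⟩ hy'
      linarith [abs_sub_abs_le_abs_sub y' y, abs_le.2 ⟨by linarith [hy.1], hy.2⟩]
    exact (hvol y hclose).trans (ENNReal.ofReal_le_ofReal hexp)
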